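/- arXiv:2102.10942 — 9 statements merged into one kernel-verified Lean document; each statement's English description precedes it below -/
import Mathlib

section
/- Let p be an odd prime and let M_p be the number of projective points [x:y:z] in P^2(F_p) satisfying x^3 + y^3 + z^3 = 0. If p is not congruent to 1 modulo 3, then M_p = p + 1. -/
/-!
If `p ≢ 1 (mod 3)`, then cubing is a bijection of `𝔽_p` (`cube_bijective`): a power of `x ^ 3`
recovers `x`. Hence for every `x, y` there is exactly one `z` with `x³ + y³ + z³ = 0`, and it
vanishes together with `x` and `y`. So forgetting `z` is a bijection from the curve onto the
projective line, which has `p + 1` points.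
-/

/-- For `p = 3` cubing is the identity; for `p = 3k + 2` the inverse of cubing is
`x ↦ x ^ (2k + 1)`, because `3(2k + 1) = p + (p - 1)`. -/
lemma cube_bijective (p : ℕ) [Fact p.Prime] (h3 : p % 3 ≠ 1) :
    Function.Bijective (fun x : ZMod p => x ^ 3) := by
  have hp : p.Prime := Fact.out
  refine Finite.injective_iff_bijective.mp ?_
  obtain ⟨n, hn⟩ : ∃ n : ℕ, ∀ x : ZMod p, (x ^ 3) ^ n = x := by
    rcases (by omega : p % 3 = 0 ∨ p % 3 = 2) with h | h
    · obtain rfl : 3 = p :=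
        (Nat.prime_dvd_prime_iff_eq Nat.prime_three hp).mp (Nat.dvd_of_mod_eq_zero h)
      exact ⟨1, fun x => by rw [pow_one, ZMod.pow_card]⟩
    · refine ⟨2 * (p / 3) + 1, fun x => ?_⟩
      rw [← pow_mul, show 3 * (2 * (p / 3) + 1) = p + (p - 1) by omega, pow_add, ZMod.pow_card,
        ← pow_succ', Nat.sub_add_cancel hp.one_le, ZMod.pow_card]
  intro x y hxy
  rw [← hn x, ← hn y]
  exact congrArg (· ^ n) hxy

/-- Gauss' theorem, first case: if `p` is an odd prime with `p ≢ 1 (mod 3)`, then the number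
of projective points `[x:y:z] ∈ ℙ²(𝔽_p)` with `x³ + y³ + z³ = 0` is `p + 1`. -/
theorem gauss_count_of_not_one_mod_three (p : ℕ) [Fact p.Prime] (hodd : Odd p)
    (h3 : p % 3 ≠ 1) :
    Nat.card {P : Projectivization (ZMod p) (Fin 3 → ZMod p) //
      P.rep 0 ^ 3 + P.rep 1 ^ 3 + P.rep 2 ^ 3 = 0} = p + 1 := by
  have hcube := cube_bijective p h3
  have hline : Nat.card (Projectivization (ZMod p) (Fin 2 → ZMod p)) = p + 1 := by
    rw [Projectivization.card_of_finrank_two _ _ (by simp), Nat.card_zmod]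
  -- `[0:0:1]`, the centre of the projection, is not on the curve.
  have hne : ∀ P : {P : Projectivization (ZMod p) (Fin 3 → ZMod p) //
      P.rep 0 ^ 3 + P.rep 1 ^ 3 + P.rep 2 ^ 3 = 0},
      (![P.1.rep 0, P.1.rep 1] : Fin 2 → ZMod p) ≠ 0 := by
    rintro ⟨P, hP⟩ h
    have h0 : P.rep 0 = 0 := congrFun h 0
    have h1 : P.rep 1 = 0 := congrFun h 1
    have h2 : P.rep 2 = 0 := by simpa [h0, h1] using hP
    apply P.rep_nonzero
    ext i
    fin_cases i
    exacts [h0, h1, h2]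
  rw [← hline]
  refine Nat.card_eq_of_bijective
    (fun P => Projectivization.mk (ZMod p) ![P.1.rep 0, P.1.rep 1] (hne P)) ⟨?_, ?_⟩
  · rintro ⟨P, hP⟩ ⟨Q, hQ⟩ h
    obtain ⟨a, ha⟩ := (Projectivization.mk_eq_mk_iff' _ _ _ _ _).mp h
    have h0 : a * Q.rep 0 = P.rep 0 := congrFun ha 0
    have h1 : a * Q.rep 1 = P.rep 1 := congrFun ha 1
    have h2 : a * Q.rep 2 = P.rep 2 := by
      apply hcube.1
      change (a * Q.rep 2) ^ 3 = P.rep 2 ^ 3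
      rw [← h0, ← h1] at hP
      linear_combination a ^ 3 * hQ - hP
    apply Subtype.ext
    change P = Q
    rw [← P.mk_rep, ← Q.mk_rep, Projectivization.mk_eq_mk_iff']
    refine ⟨a, ?_⟩
    ext i
    fin_cases i
    exacts [h0, h1, h2]
  · intro L
    induction L using Projectivization.ind with
    | h v hv =>
    obtain ⟨w, hw⟩ := hcube.2 (-(v 0 ^ 3 + v 1 ^ 3))
    have hu : (![v 0, v 1, w] : Fin 3 → ZMod p) ≠ 0 := by
      intro h
      apply hv
      ext i
      fin_cases i
      exacts [congrFun h 0, congrFun h 1]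
    obtain ⟨a, ha⟩ := Projectivization.exists_smul_eq_mk_rep (ZMod p) _ hu
    have h0 : (a : ZMod p) * v 0 = (Projectivization.mk (ZMod p) _ hu).rep 0 := congrFun ha 0
    have h1 : (a : ZMod p) * v 1 = (Projectivization.mk (ZMod p) _ hu).rep 1 := congrFun ha 1
    have h2 : (a : ZMod p) * w = (Projectivization.mk (ZMod p) _ hu).rep 2 := congrFun ha 2
    refine ⟨⟨Projectivization.mk (ZMod p) _ hu, ?_⟩, ?_⟩
    · rw [← h0, ← h1, ← h2]
      linear_combination (a : ZMod p) ^ 3 * hw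
    · rw [Projectivization.mk_eq_mk_iff']
      refine ⟨a, ?_⟩
      ext i
      fin_cases i
      exacts [h0, h1]
end

section
/- Let p be a prime with p ≡ 1 (mod 3) and let M_p be the number of projective points [x:y:z] in P^2(F_p) satisfying x^3 + y^3 + z^3 = 0. Then there exist integers u and v with u^2 + 27·v^2 = 4p, u ≡ 1 (mod 3), and M_p = p + 1 + u. -/
/-!
The proof evaluates the point count with cubic Jacobi sums. Let `χ` be a cubic character of `𝔽_p`
with values in `ℂ` (one exists since `3 ∣ p - 1`). The number of cube roots of `a` is
`1 + χ a + χ⁻¹ a`, so summing over `a + b = 1` the affine curve `x³ + y³ = 1` has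
`p + J(χ,χ) + J(χ⁻¹,χ⁻¹) + 2 J(χ,χ⁻¹)` points; here `J(χ,χ⁻¹) = -χ(-1) = -1` and
`J(χ⁻¹,χ⁻¹)` is the complex conjugate of `J = J(χ,χ)`. The projective curve has three further points
on the line `z = 0`, so it has `p + 1 + 2 Re J` points.

With `ω` a primitive cube root of unity, `J ≡ -1 mod (ω - 1)² = -3ω` in `ℤ[ω]`, hence
`J = (3d - 1) + 3eω` with integers `d`, `e`. Put `u = 2 Re J = 2(3d - 1) - 3e` and `v = e`. Then
`u ≡ 1 mod 3`, and `|J|² = p` reads `u² + 27v² = 4p`.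
-/

open Finset

section CubicCharacter

variable {F : Type*} [Field F] {χ : MulChar F ℂ}

lemma apply_neg_one (hχ : orderOf χ = 3) : χ (-1) = 1 := by
  have h3 : χ ^ 3 = 1 := hχ ▸ pow_orderOf_eq_one χ
  rw [show (-1 : F) = (-1) ^ 3 by ring, map_pow, ← MulChar.pow_apply' _ three_ne_zero, h3,
    MulChar.one_apply isUnit_one.neg]

variable [Fintype F]

/-- The kernel of a cubic character on `Fˣ` consists of cubes. -/
lemma exists_cube_of_apply_eq_one (hχ : orderOf χ = 3) {a : F} (ha : a ≠ 0) (h : χ a = 1) :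
    ∃ b : F, b ^ 3 = a := by
  obtain ⟨g, hg⟩ := IsCyclic.exists_generator (α := Fˣ)
  obtain ⟨k, hk⟩ := hg (Units.mk0 a ha)
  simp only at hk
  have hχg : MulChar.equivToUnitHom χ g ≠ 1 := by
    intro h1
    have : χ = 1 := by
      rw [MulChar.eq_iff hg, ← MulChar.coe_equivToUnitHom, h1]
      simp
    simp [this] at hχ
  have hχ3 : (MulChar.equivToUnitHom χ g) ^ 3 = 1 := by
    have h3 : χ ^ 3 = 1 := hχ ▸ pow_orderOf_eq_one χ
    ext
    rw [Units.val_pow_eq_pow_val, MulChar.coe_equivToUnitHom, ← MulChar.pow_apply_coe, h3]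
    simp
  have hord : orderOf (MulChar.equivToUnitHom χ g) = 3 := orderOf_eq_prime hχ3 hχg
  have hk1 : (MulChar.equivToUnitHom χ g) ^ k = 1 := by
    rw [← map_zpow, hk]
    ext
    rw [MulChar.coe_equivToUnitHom]
    simpa using h
  obtain ⟨m, hm⟩ := orderOf_dvd_iff_zpow_eq_one.mpr hk1
  rw [hord] at hm
  refine ⟨((g ^ m : Fˣ) : F), ?_⟩
  rw [← Units.val_pow_eq_pow_val, ← zpow_natCast, ← zpow_mul, mul_comm, ← hm, hk, Units.val_mk0]

variable [DecidableEq F]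

lemma card_cube_roots (hχ : orderOf χ = 3) (a : F) :
    (#{x : F | x ^ 3 = a} : ℂ) = 1 + χ a + χ⁻¹ a := by
  have h3 : χ ^ 3 = 1 := hχ ▸ pow_orderOf_eq_one χ
  rcases eq_or_ne a 0 with rfl | ha
  · simp [MulChar.map_zero, Finset.filter_eq']
  have hdvd : 3 ∣ Nat.card Fˣ := by
    rw [Nat.card_eq_fintype_card, Fintype.card_units, ← hχ]
    exact χ.orderOf_dvd_card_sub_one
  obtain ⟨ζ, hζ⟩ : ∃ ζ : Fˣ, orderOf ζ = 3 := by
    have : Fact (Nat.Prime 3) := ⟨Nat.prime_three⟩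
    exact exists_prime_orderOf_dvd_card' 3 hdvd
  have hζ' : IsPrimitiveRoot (ζ : F) 3 :=
    IsPrimitiveRoot.coe_units_iff.mpr (hζ ▸ IsPrimitiveRoot.orderOf ζ)
  have hcard : #{x : F | x ^ 3 = a} = if ∃ α : F, α ^ 3 = a then 3 else 0 := by
    have hroots := hζ'.card_nthRoots a
    rw [← Multiset.toFinset_card_of_nodup (hζ'.nthRoots_nodup ha)] at hroots
    convert! hroots using 2
    ext x
    simp [Polynomial.mem_nthRoots]
  have hinv : χ⁻¹ a = χ a ^ 2 := by
    rw [show χ⁻¹ = χ ^ 2 from inv_eq_of_mul_eq_one_right (by rw [← pow_succ', h3]),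
      MulChar.pow_apply' _ two_ne_zero]
  have hcube : χ a ^ 3 = 1 := by
    rw [← MulChar.pow_apply' _ three_ne_zero, h3, MulChar.one_apply ha.isUnit]
  rw [hcard, hinv]
  split_ifs with hex
  · obtain ⟨b, rfl⟩ := hex
    have hb : b ≠ 0 := by rintro rfl; simp at ha
    rw [map_pow, ← MulChar.pow_apply' _ three_ne_zero, h3, MulChar.one_apply hb.isUnit]
    norm_num
  · have hne : χ a - 1 ≠ 0 := fun h ↦
      hex (exists_cube_of_apply_eq_one hχ ha (sub_eq_zero.mp h))
    apply mul_left_cancel₀ hne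
    push_cast
    linear_combination -hcube

lemma card_affine (hχ : orderOf χ = 3) :
    (#{q : F × F | q.1 ^ 3 + q.2 ^ 3 = 1} : ℂ) =
      Fintype.card F - 2 + jacobiSum χ χ + jacobiSum χ⁻¹ χ⁻¹ := by
  have hne : χ ≠ 1 := by rintro rfl; simp at hχ
  have hfib : #{q : F × F | q.1 ^ 3 + q.2 ^ 3 = 1} =
      ∑ a : F, #{x : F | x ^ 3 = a} * #{x : F | x ^ 3 = 1 - a} := by
    rw [card_eq_sum_card_fiberwise (f := fun q : F × F ↦ q.1 ^ 3) (t := univ) (by simp)]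
    refine sum_congr rfl fun a _ ↦ ?_
    rw [← card_product]
    congr 1
    ext q
    simp only [mem_filter, mem_univ, true_and, mem_product]
    grind
  have hsub (ψ : MulChar F ℂ) : ∑ a : F, ψ (1 - a) = ∑ a : F, ψ a :=
    (Equiv.subLeft (1 : F)).sum_comp ψ
  rw [hfib]
  push_cast
  simp only [card_cube_roots hχ]
  have hexp (a : F) : (1 + χ a + χ⁻¹ a) * (1 + χ (1 - a) + χ⁻¹ (1 - a)) =
      1 + χ a + χ⁻¹ a + χ (1 - a) + χ⁻¹ (1 - a) + χ a * χ (1 - a) + χ⁻¹ a * χ⁻¹ (1 - a)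
        + χ a * χ⁻¹ (1 - a) + χ⁻¹ a * χ (1 - a) := by ring
  simp only [hexp, sum_add_distrib, hsub, MulChar.sum_eq_zero_of_ne_one hne,
    MulChar.sum_eq_zero_of_ne_one (inv_ne_one.mpr hne)]
  simp only [← jacobiSum.eq_1]
  rw [jacobiSum_comm χ⁻¹ χ, jacobiSum_nontrivial_inv hne, apply_neg_one hχ]
  simp
  ring

end CubicCharacter

section Projective

variable {F : Type*} [Field F]

lemma cubic_mk_rep (v : Fin 3 → F) (hv : v ≠ 0) :
    (Projectivization.mk F v hv).rep 0 ^ 3 + (Projectivization.mk F v hv).rep 1 ^ 3 +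
      (Projectivization.mk F v hv).rep 2 ^ 3 = 0 ↔ v 0 ^ 3 + v 1 ^ 3 + v 2 ^ 3 = 0 := by
  obtain ⟨a, ha⟩ := Projectivization.exists_smul_eq_mk_rep F v hv
  rw [← ha]
  simp only [Pi.smul_apply, Units.smul_def, smul_eq_mul, mul_pow, ← mul_add]
  simp

/-- The chart `[x : y : -1]` together with the points `[t : 1 : 0]` on the line at infinity. The
third coordinate `-1` turns the affine equation into `x³ + y³ = 1`. -/
noncomputable def chart :
    {q : F × F // q.1 ^ 3 + q.2 ^ 3 = 1} ⊕ {t : F // t ^ 3 = -1} →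
      {P : Projectivization F (Fin 3 → F) // P.rep 0 ^ 3 + P.rep 1 ^ 3 + P.rep 2 ^ 3 = 0}
  | .inl q => ⟨.mk F ![q.1.1, q.1.2, -1] (fun h ↦ by simpa using congrFun h 2),
      (cubic_mk_rep _ _).mpr (by simp; linear_combination q.2)⟩
  | .inr t => ⟨.mk F ![t.1, 1, 0] (fun h ↦ by simpa using congrFun h 1),
      (cubic_mk_rep _ _).mpr (by simp; linear_combination t.2)⟩

lemma chart_bijective : Function.Bijective (chart (F := F)) := by
  constructor
  · rintro (⟨⟨x, y⟩, hq⟩ | ⟨t, ht⟩) (⟨⟨x', y'⟩, hq'⟩ | ⟨t', ht'⟩) h <;>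
    · simp only [chart, Subtype.mk.injEq, Projectivization.mk_eq_mk_iff'] at h
      obtain ⟨a, ha⟩ := h
      have h0 := congrFun ha 0
      have h1 := congrFun ha 1
      have h2 := congrFun ha 2
      simp at h0 h1 h2
      all_goals grind
  · rintro ⟨P, hP⟩
    induction P using Projectivization.ind with | h v hv
    rw [cubic_mk_rep] at hP
    by_cases hz : v 2 = 0
    · have hy : v 1 ≠ 0 := by
        intro hy
        apply hv
        ext i
        fin_cases i <;> simp_all
      refine ⟨.inr ⟨v 0 / v 1, ?_⟩, ?_⟩
      · field_simp
        simp [hz] at hP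
        linear_combination hP
      · simp only [chart, Subtype.mk.injEq, Projectivization.mk_eq_mk_iff']
        refine ⟨(v 1)⁻¹, ?_⟩
        ext i
        fin_cases i <;> simp [hz, hy] <;> field_simp
    · refine ⟨.inl ⟨(-(v 0 / v 2), -(v 1 / v 2)), ?_⟩, ?_⟩
      · simp only
        field_simp
        linear_combination -hP
      · simp only [chart, Subtype.mk.injEq, Projectivization.mk_eq_mk_iff']
        refine ⟨-(v 2)⁻¹, ?_⟩
        ext i
        fin_cases i <;> simp [hz] <;> field_simp

lemma card_projective [Fintype F] [DecidableEq F] {χ : MulChar F ℂ} (hχ : orderOf χ = 3) :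
    (Nat.card {P : Projectivization F (Fin 3 → F) //
      P.rep 0 ^ 3 + P.rep 1 ^ 3 + P.rep 2 ^ 3 = 0} : ℂ) =
      Fintype.card F + 1 + jacobiSum χ χ + jacobiSum χ⁻¹ χ⁻¹ := by
  rw [← Nat.card_eq_of_bijective _ (chart_bijective (F := F)), Nat.card_sum,
    Nat.card_eq_fintype_card, Nat.card_eq_fintype_card, Fintype.card_subtype,
    Fintype.card_subtype, Nat.cast_add, card_affine hχ, card_cube_roots hχ,
    MulChar.inv_apply', inv_neg_one, apply_neg_one hχ]
  ring

end Projective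

/-- `ℤ[ω] = ℤ + ℤω` for a root `ω` of `X² + X + 1`. -/
lemma exists_of_mem_adjoin {ω z : ℂ} (hω : ω ^ 2 + ω + 1 = 0)
    (hz : z ∈ Algebra.adjoin ℤ {ω}) : ∃ c d : ℤ, z = c + d * ω := by
  induction hz using Algebra.adjoin_induction with
  | mem x hx => exact ⟨0, 1, by simpa using hx⟩
  | algebraMap r => exact ⟨r, 0, by simp⟩
  | add x y _ _ hx hy =>
    obtain ⟨a, b, rfl⟩ := hx
    obtain ⟨c, d, rfl⟩ := hy
    exact ⟨a + c, b + d, by push_cast; ring⟩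
  | mul x y _ _ hx hy =>
    obtain ⟨a, b, rfl⟩ := hx
    obtain ⟨c, d, rfl⟩ := hy
    exact ⟨a * c - b * d, a * d + b * c - b * d, by
      push_cast; linear_combination (b * d : ℂ) * hω⟩

/-- Gauss' theorem, second case: if `p` is a prime with `p ≡ 1 (mod 3)`, then there are
integers `u`, `v` with `u² + 27v² = 4p`, `u ≡ 1 (mod 3)`, and the number of projective points
`[x:y:z] ∈ ℙ²(𝔽_p)` with `x³ + y³ + z³ = 0` equals `p + 1 + u`. -/
theorem gauss_count_of_one_mod_three (p : ℕ) [Fact p.Prime] (h3 : p % 3 = 1) :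
    ∃ u v : ℤ, u ^ 2 + 27 * v ^ 2 = 4 * p ∧ u % 3 = 1 ∧
      (Nat.card {P : Projectivization (ZMod p) (Fin 3 → ZMod p) //
        P.rep 0 ^ 3 + P.rep 1 ^ 3 + P.rep 2 ^ 3 = 0} : ℤ) = p + 1 + u := by
  obtain ⟨ω, hω⟩ : ∃ ω : ℂ, IsPrimitiveRoot ω 3 := ⟨_, Complex.isPrimitiveRoot_exp 3 (by norm_num)⟩
  have hω2 : ω ^ 2 + ω + 1 = 0 := by
    have := hω.geom_sum_eq_zero (by norm_num)
    simp [sum_range_succ] at this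
    linear_combination this
  have hdvd : 3 ∣ Fintype.card (ZMod p) - 1 := by rw [ZMod.card]; lia
  obtain ⟨χ, hχ⟩ := MulChar.exists_mulChar_orderOf (ZMod p) hdvd hω
  have hχ3 : χ ^ 3 = 1 := hχ ▸ pow_orderOf_eq_one χ
  have hne : χ ≠ 1 := by rintro rfl; simp at hχ
  have hne2 : χ * χ ≠ 1 := by
    rw [← sq]
    exact pow_ne_one_of_lt_orderOf two_ne_zero (by lia)
  obtain ⟨z, hz, hJ⟩ := exists_jacobiSum_eq_neg_one_add (by norm_num) hχ3 hχ3 hdvd hω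
  obtain ⟨c, d, rfl⟩ := exists_of_mem_adjoin hω2 hz
  have hJ' : jacobiSum χ χ = (3 * d - 1) + 3 * (d - c) * ω := by
    rw [hJ]
    linear_combination (c - 3 * d + d * ω : ℂ) * hω2
  -- `star ω` is the other root of `X² + X + 1`.
  have hstar : star ω = -1 - ω := by
    have h1 : star ω = ω⁻¹ :=
      (Complex.inv_eq_conj (hω.norm'_eq_one (by norm_num))).symm
    rw [h1]
    have : ω ≠ 0 := hω.ne_zero (by norm_num)
    field_simp
    linear_combination hω2
  have hJinv : jacobiSum χ⁻¹ χ⁻¹ = (3 * d - 1) + 3 * (d - c) * (-1 - ω) := by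
    have : jacobiSum χ⁻¹ χ⁻¹ = star (jacobiSum χ χ) := by
      simp only [jacobiSum, star_sum, star_mul', MulChar.star_apply']
    rw [this, hJ', ← hstar]
    simp
  have hnorm := jacobiSum_mul_jacobiSum_inv (F := ZMod p) (F' := ℂ)
    (by rw [ringChar.eq_zero, ZMod.ringChar_zmod_n]; exact (Fact.out : p.Prime).ne_zero.symm)
    hne hne hne2
  rw [hJ', hJinv, ZMod.card] at hnorm
  refine ⟨2 * (3 * d - 1) - 3 * (d - c), d - c, ?_, by lia, ?_⟩
  · have : ((2 * (3 * d - 1) - 3 * (d - c)) ^ 2 + 27 * (d - c) ^ 2 : ℂ) = 4 * p := by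
      linear_combination 4 * hnorm + 36 * (d - c : ℂ) ^ 2 * hω2
    exact_mod_cast this
  · have := card_projective hχ
    rw [hJ', hJinv, ZMod.card] at this
    have h' : (Nat.card {P : Projectivization (ZMod p) (Fin 3 → ZMod p) //
        P.rep 0 ^ 3 + P.rep 1 ^ 3 + P.rep 2 ^ 3 = 0} : ℂ) =
        p + 1 + (2 * (3 * d - 1) - 3 * (d - c)) := by
      rw [this]; ring
    exact_mod_cast h'
end

section
/- Let p be a prime with p ≡ 1 (mod 3). Then the equation u^2 + 27·v^2 = 4p has an integer solution, and this solution is unique up to the signs of u and v: if (u1,v1) and (u2,v2) are integer solutions with u1 ≡ u2 ≡ 1 (mod 3), then u1 = u2 and v1 = ±v2. -/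
/-!
Existence: since `3 ∣ p - 1`, the field `ZMod p` contains a primitive cube root of unity `w`, and
`2 * w + 1` is a square root of `-3`. Thue's pigeonhole argument gives a nonzero `(x, y)` with
`x² + 3y² = k * p` and `0 < k < 4`; the case `k = 2` is impossible modulo `4`, and the case `k = 3`
reduces to `k = 1`, so `p = a² + 3b²` (`exists_sq_add_three_sq`). The identities
`4p = (2a)² + 3(2b)² = (a + 3b)² + 3(a - b)² = (a - 3b)² + 3(a + b)²` finish the argument, because
`3 ∤ a` forces `3` to divide one of `b`, `a - b`, `a + b`.

Uniqueness: `(u₁v₂ - u₂v₁)(u₁v₂ + u₂v₁) = 4p(v₂² - v₁²)`, so `p` divides one of the two factors.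
Each factor `D` satisfies `27D² ≤ 16p²` by Brahmagupta's identity, so that factor vanishes, whence
`u₁² = u₂²` and `v₁² = v₂²`.
-/

/-- Thue's lemma for a prime modulus, proved by the pigeonhole principle on the
`(√p + 1)² > p` pairs `(i, j)` with `0 ≤ i, j ≤ √p`. -/
lemma thue_prime (p : ℕ) (hp : p.Prime) (c : ZMod p) :
    ∃ x y : ℤ, (x ≠ 0 ∨ y ≠ 0) ∧ x ^ 2 < p ∧ y ^ 2 < p ∧ (x : ZMod p) = c * (y : ZMod p) := by
  have := Fact.mk hp
  set s := Nat.sqrt p with hs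
  have hs1 : s * s ≤ p := Nat.sqrt_le p
  have hs2 : p < (s + 1) * (s + 1) := Nat.lt_succ_sqrt p
  -- A prime is not a perfect square, which makes the bounds strict.
  have hs3 : s * s < p := by
    refine lt_of_le_of_ne hs1 fun h => ?_
    exact Nat.not_prime_mul (a := s) (b := s) (by rintro h1; rw [h1] at h; exact hp.one_lt.ne h)
      (by rintro h1; rw [h1] at h; exact hp.one_lt.ne h) (h ▸ hp)
  obtain ⟨a, ha, b, hb, hab, hf⟩ := Finset.exists_ne_map_eq_of_card_lt_of_maps_to
    (s := Finset.range (s + 1) ×ˢ Finset.range (s + 1)) (t := (Finset.univ : Finset (ZMod p)))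
    (by simpa [ZMod.card] using hs2)
    (f := fun q => (q.1 : ZMod p) - c * (q.2 : ZMod p)) 
    (fun _ _ => Finset.mem_coe.2 (Finset.mem_univ _))
  simp only [Finset.mem_product, Finset.mem_range] at ha hb
  have bound : ∀ i j : ℕ, i < s + 1 → j < s + 1 → ((i : ℤ) - j) ^ 2 < p := by
    intro i j hi hj
    have h1 : (i : ℤ) ≤ s := by omega
    have h2 : (j : ℤ) ≤ s := by omega
    have h3 : (s : ℤ) * s < p := by exact_mod_cast hs3
    have h4 : ((i : ℤ) - j) ^ 2 ≤ (s : ℤ) ^ 2 := sq_le_sq' (by omega) (by omega)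
    nlinarith
  refine ⟨a.1 - b.1, a.2 - b.2, ?_, bound _ _ ha.1 hb.1, bound _ _ ha.2 hb.2, ?_⟩
  · by_contra! h
    exact hab (Prod.ext (by omega) (by omega))
  · push_cast
    linear_combination hf

lemma exists_sq_eq_neg_three (p : ℕ) (hp : p.Prime) (h3 : p % 3 = 1) :
    ∃ c : ZMod p, c ^ 2 = -3 := by
  have := Fact.mk hp
  have : Fact (Nat.Prime 3) := ⟨Nat.prime_three⟩
  obtain ⟨w, hw⟩ := exists_prime_orderOf_dvd_card (G := (ZMod p)ˣ) 3 (by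
    rw [ZMod.card_units]; omega)
  have h1 : (w : ZMod p) ^ 3 = 1 := by
    rw [← Units.val_pow_eq_pow_val, ← hw, pow_orderOf_eq_one, Units.val_one]
  have h2 : (w : ZMod p) - 1 ≠ 0 := by
    intro h
    have : w = 1 := Units.ext (by simpa [sub_eq_zero] using h)
    rw [this, orderOf_one] at hw
    omega
  have h4 : (w : ZMod p) ^ 2 + w + 1 = 0 := by
    apply mul_left_cancel₀ h2
    linear_combination h1
  exact ⟨2 * w + 1, by linear_combination 4 * h4⟩

lemma exists_sq_add_three_sq (p : ℕ) (hp : p.Prime) (h3 : p % 3 = 1) :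
    ∃ a b : ℤ, a ^ 2 + 3 * b ^ 2 = p := by
  have := Fact.mk hp
  obtain ⟨c, hc⟩ := exists_sq_eq_neg_three p hp h3
  obtain ⟨x, y, hne, hx, hy, hxy⟩ := thue_prime p hp c
  have hdvd : (p : ℤ) ∣ x ^ 2 + 3 * y ^ 2 := by
    rw [← ZMod.intCast_zmod_eq_zero_iff_dvd]
    push_cast
    rw [hxy]
    linear_combination (y : ZMod p) ^ 2 * hc
  obtain ⟨k, hk⟩ := hdvd
  have hp0 : (0 : ℤ) < p := by exact_mod_cast hp.pos
  have hpos : 0 < x ^ 2 + 3 * y ^ 2 := by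
    rcases hne with h | h <;> positivity
  have hk0 : 0 < k := by
    rw [hk] at hpos
    exact pos_of_mul_pos_right hpos hp0.le
  have hk4 : k < 4 := by
    by_contra! h
    nlinarith
  have hodd : p % 2 = 1 := by
    rcases hp.eq_two_or_odd with h | h
    · omega
    · exact h
  interval_cases k
  · exact ⟨x, y, by linarith⟩
  · -- Modulo `4`, `x² + 3y²` is never `2`.
    exfalso
    have hx4 : x ^ 2 % 4 = 0 ∨ x ^ 2 % 4 = 1 := by
      rcases Int.even_or_odd' x with ⟨m, rfl | rfl⟩
      · left; ring_nf; omega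
      · right; ring_nf; omega
    have hy4 : y ^ 2 % 4 = 0 ∨ y ^ 2 % 4 = 1 := by
      rcases Int.even_or_odd' y with ⟨m, rfl | rfl⟩
      · left; ring_nf; omega
      · right; ring_nf; omega
    omega
  · have : (3 : ℤ) ∣ x ^ 2 := by omega
    obtain ⟨z, rfl⟩ := Int.prime_three.dvd_of_dvd_pow this
    exact ⟨y, z, by linarith⟩

lemma exists_sol (p : ℕ) (hp : p.Prime) (h3 : p % 3 = 1) :
    ∃ u v : ℤ, u ^ 2 + 27 * v ^ 2 = 4 * p := by
  obtain ⟨a, b, hab⟩ := exists_sq_add_three_sq p hp h3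
  have ha : a % 3 ≠ 0 := by
    intro h
    obtain ⟨z, rfl⟩ := Int.dvd_of_emod_eq_zero h
    ring_nf at hab
    omega
  have ha3 : a % 3 = 1 ∨ a % 3 = 2 := by omega
  have hb3 : b % 3 = 0 ∨ b % 3 = 1 ∨ b % 3 = 2 := by omega
  have hcases : 3 ∣ b ∨ 3 ∣ a - b ∨ 3 ∣ a + b := by
    rcases ha3 with ha3 | ha3 <;> rcases hb3 with hb3 | hb3 | hb3 <;> omega
  rcases hcases with ⟨v, hv⟩ | ⟨v, hv⟩ | ⟨v, hv⟩
  · exact ⟨2 * a, 2 * v, by rw [← hab, hv]; ring⟩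
  · exact ⟨a + 3 * b, v, by linear_combination 4 * hab - 3 * (a - b + 3 * v) * hv⟩
  · exact ⟨a - 3 * b, v, by linear_combination 4 * hab - 3 * (a + b + 3 * v) * hv⟩

/-- If `p` divides the determinant `u₁v₂ - u₂v₁`, Brahmagupta's identity makes the determinant too
small to be a nonzero multiple of `p`. -/
lemma det_eq_zero_of_dvd {p u₁ v₁ u₂ v₂ : ℤ} (hp : 0 < p) (h₁ : u₁ ^ 2 + 27 * v₁ ^ 2 = 4 * p)
    (h₂ : u₂ ^ 2 + 27 * v₂ ^ 2 = 4 * p) (h : p ∣ u₁ * v₂ - u₂ * v₁) :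
    u₁ * v₂ - u₂ * v₁ = 0 := by
  obtain ⟨d, hd⟩ := h
  have key : (u₁ * u₂ + 27 * v₁ * v₂) ^ 2 + 27 * (u₁ * v₂ - u₂ * v₁) ^ 2 = 16 * p ^ 2 := by
    linear_combination (u₂ ^ 2 + 27 * v₂ ^ 2) * h₁ + 4 * p * h₂
  have hd0 : d = 0 := by
    by_contra hne
    have h1 : 1 ≤ d ^ 2 := by
      have : 0 < d ^ 2 := by positivity
      omega
    rw [hd, mul_pow] at key
    nlinarith [sq_nonneg (u₁ * u₂ + 27 * v₁ * v₂), mul_le_mul_of_nonneg_left h1 (sq_nonneg p),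
      pow_pos hp 2]
  rw [hd, hd0, mul_zero]

lemma sq_eq_of_sol {p u₁ v₁ u₂ v₂ : ℤ} (hp : Prime p) (hpos : 0 < p)
    (h₁ : u₁ ^ 2 + 27 * v₁ ^ 2 = 4 * p) (h₂ : u₂ ^ 2 + 27 * v₂ ^ 2 = 4 * p) :
    u₁ ^ 2 = u₂ ^ 2 := by
  have hprod : (u₁ * v₂ - u₂ * v₁) * (u₁ * v₂ - u₂ * -v₁) = p * (4 * (v₂ ^ 2 - v₁ ^ 2)) := by
    linear_combination v₂ ^ 2 * h₁ - v₁ ^ 2 * h₂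
  have hzero : (u₁ * v₂ - u₂ * v₁) * (u₁ * v₂ - u₂ * -v₁) = 0 := by
    rcases hp.dvd_or_dvd (Dvd.intro _ hprod.symm) with h | h
    · rw [det_eq_zero_of_dvd hpos h₁ h₂ h, zero_mul]
    · rw [det_eq_zero_of_dvd hpos (by rwa [neg_sq]) h₂ h, mul_zero]
  apply mul_left_cancel₀ (mul_ne_zero four_ne_zero hpos.ne')
  linear_combination -u₁ ^ 2 * h₂ + u₂ ^ 2 * h₁ + 27 * hzero

/-- For a prime `p ≡ 1 (mod 3)`, the equation `u² + 27v² = 4p` has an integer solution, and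
the solution is unique up to signs: if `(u₁,v₁)` and `(u₂,v₂)` are solutions with
`u₁ ≡ u₂ ≡ 1 (mod 3)`, then `u₁ = u₂` and `v₁ = ±v₂`. -/
theorem exists_unique_sol_of_one_mod_three (p : ℕ) (hp : p.Prime) (h3 : p % 3 = 1) :
    (∃ u v : ℤ, u ^ 2 + 27 * v ^ 2 = 4 * p) ∧
      ∀ u₁ v₁ u₂ v₂ : ℤ, u₁ ^ 2 + 27 * v₁ ^ 2 = 4 * p → u₂ ^ 2 + 27 * v₂ ^ 2 = 4 * p →
        u₁ % 3 = 1 → u₂ % 3 = 1 → u₁ = u₂ ∧ (v₁ = v₂ ∨ v₁ = -v₂) := by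
  refine ⟨exists_sol p hp h3, fun u₁ v₁ u₂ v₂ h₁ h₂ hu₁ hu₂ => ?_⟩
  have hsq := sq_eq_of_sol (Nat.prime_iff_prime_int.mp hp) (by exact_mod_cast hp.pos) h₁ h₂
  refine ⟨?_, sq_eq_sq_iff_eq_or_eq_neg.mp (by linarith)⟩
  rcases sq_eq_sq_iff_eq_or_eq_neg.mp hsq with h | h <;> omega
end

section
/- Let q be a prime power and let B = [[b11, b12], [b21, b22]] be an integer matrix with nonzero determinant. Then the quotient group (ℤ/(q−1))^2 / ⟨(b11, b12), (b21, b22)⟩ is finite of order k = gcd((q−1)·gcd(d, e, f), det(B)), where d = gcd(b11, b12, q−1), e = gcd(b21, b22, q−1), and f = gcd(b11 − b21, b12 − b22, q−1). -/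
/-!
Write `n = q - 1 ≥ 1`. The quotient of `(ℤ/n)²` by the rows of `B` has the same order as the index
in `ℤ²` of the preimage `L` of the row subgroup, that is, of the lattice spanned by the rows of `B`
and `n ℤ²`.

The index of a full-rank lattice in `ℤ²` is `|det|` of a basis of it, and it is therefore the
greatest common divisor of the determinants `det (u, v)` with `u, v ∈ L`
(`index_dvd_det` and `dvd_index`). By bilinearity that divisor is the gcd of the `2 × 2` minors of
the generators: `det B`, the products `n * bᵢⱼ`, and `n²`. Since `gcd (d, e, f)` is the gcd of the
entries `bᵢⱼ` and `n`, this is the number `k`.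
-/

/-- A finite-index subgroup of `ℤ²` has a basis of two vectors `u, v`, and its index is
`|det (u, v)|`. -/
theorem exists_basis_index (L : AddSubgroup (ℤ × ℤ)) [L.FiniteIndex] :
    ∃ u ∈ L, ∃ v ∈ L, L.index = (u.1 * v.2 - u.2 * v.1).natAbs ∧
      ∀ x ∈ L, ∃ s t : ℤ, x = s • u + t • v := by
  have hr : Module.finrank ℤ L.toIntSubmodule = 2 := by
    have h := AddSubgroup.finrank_eq_of_finiteIndex L
    rw [Module.finrank_prod, Module.finrank_self] at h
    exact h
  let b : Module.Basis (Fin 2) ℤ L.toIntSubmodule := Module.finBasisOfFinrankEq ℤ _ hr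
  refine ⟨(b 0 : ℤ × ℤ), (b 0).2, (b 1 : ℤ × ℤ), (b 1).2, ?_, ?_⟩
  · have h := AddSubgroup.index_eq_natAbs_det (Module.Basis.finTwoProd ℤ) L b
    rw [h, Module.Basis.det_apply, Matrix.det_fin_two]
    simp only [Module.Basis.toMatrix_apply, Module.Basis.coe_finTwoProd_repr]
    congr 1
    simp only [Matrix.cons_val_zero, Matrix.cons_val_one]
    exact congrArg (_ - ·) (mul_comm _ _)
  · intro x hx
    refine ⟨b.repr ⟨x, hx⟩ 0, b.repr ⟨x, hx⟩ 1, ?_⟩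
    have h := congrArg (Subtype.val) (b.sum_repr ⟨x, hx⟩)
    rw [Fin.sum_univ_two] at h
    exact h.symm

theorem index_dvd_det (L : AddSubgroup (ℤ × ℤ)) [L.FiniteIndex] {x y : ℤ × ℤ}
    (hx : x ∈ L) (hy : y ∈ L) : (L.index : ℤ) ∣ x.1 * y.2 - x.2 * y.1 := by
  obtain ⟨u, -, v, -, hi, hb⟩ := exists_basis_index L
  obtain ⟨s, t, rfl⟩ := hb x hx
  obtain ⟨s', t', rfl⟩ := hb y hy
  rw [hi, Int.natAbs_dvd]
  refine ⟨s * t' - t * s', ?_⟩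
  simp
  ring

theorem dvd_index (L : AddSubgroup (ℤ × ℤ)) [L.FiniteIndex] (g : ℤ)
    (h : ∀ x ∈ L, ∀ y ∈ L, g ∣ x.1 * y.2 - x.2 * y.1) : g ∣ (L.index : ℤ) := by
  obtain ⟨u, hu, v, hv, hi, -⟩ := exists_basis_index L
  rw [hi, Int.dvd_natAbs]
  exact h u hu v hv

/-- The coordinatewise reduction `ℤ² → (ℤ/n)²`. -/
def redHom (n : ℕ) : ℤ × ℤ →+ ZMod n × ZMod n :=
  (Int.castAddHom (ZMod n)).prodMap (Int.castAddHom (ZMod n))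

theorem redHom_surjective (n : ℕ) : Function.Surjective (redHom n) :=
  Function.Surjective.prodMap ZMod.intCast_surjective ZMod.intCast_surjective

/-- The preimage of the row subgroup is the lattice spanned by the two rows and `n ℤ²`. -/
theorem mem_comap_iff (n : ℕ) (a b c d : ℤ) (x : ℤ × ℤ) :
    x ∈ (AddSubgroup.closure {((a : ZMod n), (b : ZMod n)), ((c : ZMod n), (d : ZMod n))}).comap
      (redHom n) ↔
    ∃ s t w z : ℤ, x = (s * a + t * c + n * w, s * b + t * d + n * z) := by
  rw [AddSubgroup.mem_comap, AddSubgroup.mem_closure_pair]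
  obtain ⟨x1, x2⟩ := x
  have key (s t : ℤ) : (s • ((a : ZMod n), (b : ZMod n)) + t • ((c : ZMod n), (d : ZMod n)) =
      redHom n (x1, x2)) ↔ ((n : ℤ) ∣ x1 - (s * a + t * c)) ∧ ((n : ℤ) ∣ x2 - (s * b + t * d)) := by
    rw [← ZMod.intCast_eq_intCast_iff_dvd_sub, ← ZMod.intCast_eq_intCast_iff_dvd_sub]
    simp [redHom, Prod.ext_iff]
  simp only [key]
  constructor
  · rintro ⟨s, t, ⟨w, hw⟩, ⟨z, hz⟩⟩
    exact ⟨s, t, w, z, Prod.ext (by linarith) (by linarith)⟩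
  · rintro ⟨s, t, w, z, h⟩
    obtain ⟨h1, h2⟩ := Prod.mk.inj h
    exact ⟨s, t, ⟨w, by linarith⟩, ⟨z, by linarith⟩⟩

/-- The order of the cokernel for any modulus `n ≠ 0`, with `g` given only by its universal property
as the gcd of the four entries and `n`. -/
theorem card_coker_aux (n : ℕ) (hn : n ≠ 0) (a b c d : ℤ) (g k : ℕ)
    (hga : (g : ℤ) ∣ a) (hgb : (g : ℤ) ∣ b) (hgc : (g : ℤ) ∣ c) (hgd : (g : ℤ) ∣ d)
    (hgn : (g : ℤ) ∣ n)
    (hg : ∀ m : ℤ, m ∣ a → m ∣ b → m ∣ c → m ∣ d → m ∣ n → m ∣ g)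
    (hk : k = Int.gcd (n * g) (a * d - b * c)) :
    Nat.card ((ZMod n × ZMod n) ⧸
      AddSubgroup.closure {((a : ZMod n), (b : ZMod n)), ((c : ZMod n), (d : ZMod n))}) = k := by
  have : NeZero n := ⟨hn⟩
  set H := AddSubgroup.closure {((a : ZMod n), (b : ZMod n)), ((c : ZMod n), (d : ZMod n))} with hH
  change H.index = k
  rw [← H.index_comap_of_surjective (redHom_surjective n)]
  have hfin : (H.comap (redHom n)).FiniteIndex :=
    ⟨by rw [H.index_comap_of_surjective (redHom_surjective n)]
        exact AddSubgroup.FiniteIndex.index_ne_zero⟩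
  have hmem := mem_comap_iff n a b c d
  rw [← hH] at hmem
  set L := H.comap (redHom n)
  have hkn : (k : ℤ) ∣ n * g := hk ▸ Int.gcd_dvd_left ..
  have hkd : (k : ℤ) ∣ a * d - b * c := hk ▸ Int.gcd_dvd_right ..
  apply Nat.dvd_antisymm
  · have r1 : (a, b) ∈ L := (hmem _).2 ⟨1, 0, 0, 0, by simp⟩
    have r2 : (c, d) ∈ L := (hmem _).2 ⟨0, 1, 0, 0, by simp⟩
    have n1 : ((n : ℤ), (0 : ℤ)) ∈ L := (hmem _).2 ⟨0, 0, 1, 0, by simp⟩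
    have n2 : ((0 : ℤ), (n : ℤ)) ∈ L := (hmem _).2 ⟨0, 0, 0, 1, by simp⟩
    have key {x y : ℤ × ℤ} (hx : x ∈ L) (hy : y ∈ L) := index_dvd_det L hx hy
    rw [hk]
    refine Int.dvd_gcd ?_ (key r1 r2)
    -- A Bézout relation for `g` makes `n * g` a combination of the minors `n * bᵢⱼ` and `n * n`.
    have hcomb : (g : ℤ) ∈ Ideal.span {a, b, c, d, (n : ℤ)} := by
      obtain ⟨m, hm⟩ := (IsPrincipalIdealRing.principal (Ideal.span {a, b, c, d, (n : ℤ)})).1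
      have hm' : Ideal.span {a, b, c, d, (n : ℤ)} = Ideal.span {m} := hm
      rw [hm', Ideal.mem_span_singleton]
      have hd (z : ℤ) (hz : z ∈ ({a, b, c, d, (n : ℤ)} : Set ℤ)) : m ∣ z := by
        rw [← Ideal.mem_span_singleton, ← hm']
        exact Ideal.subset_span hz
      exact hg m (hd _ (by simp)) (hd _ (by simp)) (hd _ (by simp)) (hd _ (by simp))
        (hd _ (by simp))
    have ha := key r1 n2
    have hb := key n1 r1
    have hc := key r2 n2
    have hd := key n1 r2
    have hnn := key n1 n2
    simp only [mul_zero, zero_mul, sub_zero] at ha hb hc hd hnn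
    simp only [Ideal.mem_span_insert, Ideal.mem_span_singleton'] at hcomb
    obtain ⟨y1, _, ⟨y2, _, ⟨y3, _, ⟨y4, _, ⟨y5, rfl⟩, rfl⟩, rfl⟩, rfl⟩, h⟩ := hcomb
    obtain ⟨A, hA⟩ := ha
    obtain ⟨B, hB⟩ := hb
    obtain ⟨C, hC⟩ := hc
    obtain ⟨D, hD⟩ := hd
    obtain ⟨N, hN⟩ := hnn
    refine ⟨y1 * A + y2 * B + y3 * C + y4 * D + y5 * N, ?_⟩
    rw [h]
    linear_combination y1 * hA + y2 * hB + y3 * hC + y4 * hD + y5 * hN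
  · rw [← Int.natCast_dvd_natCast]
    refine dvd_index L k fun x hx y hy => ?_
    obtain ⟨s, t, w, z, rfl⟩ := (hmem x).1 hx
    obtain ⟨s', t', w', z', rfl⟩ := (hmem y).1 hy
    obtain ⟨a', ha⟩ := hga
    obtain ⟨b', hb⟩ := hgb
    obtain ⟨c', hc⟩ := hgc
    obtain ⟨d', hd⟩ := hgd
    obtain ⟨n', hn'⟩ := hgn
    -- Every mixed minor is a multiple of `n * g`, since `g` divides each `bᵢⱼ` and `n`.
    have e : (s * a + t * c + n * w) * (s' * b + t' * d + n * z')
        - (s * b + t * d + n * z) * (s' * a + t' * c + n * w')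
        = (s * t' - t * s') * (a * d - b * c) + (n * g) * ((s * a' + t * c') * z'
          + w * (s' * b' + t' * d') - (s * b' + t * d') * w' - z * (s' * a' + t' * c')
          + n' * (w * z' - z * w')) := by
      have h1 : (n : ℤ) * n = n * (g * n') := by rw [← hn']
      rw [ha, hb, hc, hd]
      linear_combination (w * z' - z * w') * h1
    exact e ▸ (hkd.mul_left _).add (hkn.mul_right _)

/-- For a prime power `q` and an integer matrix `B = [[b₁₁,b₁₂],[b₂₁,b₂₂]]` with nonzero
determinant, the quotient `(ℤ/(q-1))² / ⟨(b₁₁,b₁₂),(b₂₁,b₂₂)⟩` is finite of order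
`k = gcd((q-1)·gcd(d,e,f), det B)`. -/
theorem card_coker (q : ℕ) (hq : IsPrimePow q) (b11 b12 b21 b22 : ℤ)
    (hdet : b11 * b22 - b12 * b21 ≠ 0) (d e f k : ℕ)
    (hd : d = Int.gcd b11 (Int.gcd b12 ((q : ℤ) - 1)))
    (he : e = Int.gcd b21 (Int.gcd b22 ((q : ℤ) - 1)))
    (hf : f = Int.gcd (b11 - b21) (Int.gcd (b12 - b22) ((q : ℤ) - 1)))
    (hk : k = Int.gcd (((q : ℤ) - 1) * (Nat.gcd d (Nat.gcd e f) : ℤ))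
      (b11 * b22 - b12 * b21)) :
    Nat.card ((ZMod (q - 1) × ZMod (q - 1)) ⧸
      AddSubgroup.closure {((b11 : ZMod (q - 1)), (b12 : ZMod (q - 1))),
        ((b21 : ZMod (q - 1)), (b22 : ZMod (q - 1)))}) = k := by
  have hq2 : 2 ≤ q := hq.two_le
  have hcast : (q : ℤ) - 1 = ((q - 1 : ℕ) : ℤ) := by push_cast [show 1 ≤ q by omega]; rfl
  rw [hcast] at hd he hf hk
  have hgd : ((d.gcd (e.gcd f) : ℕ) : ℤ) ∣ d := Int.natCast_dvd_natCast.2 (Nat.gcd_dvd_left ..)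
  have hge : ((d.gcd (e.gcd f) : ℕ) : ℤ) ∣ e :=
    Int.natCast_dvd_natCast.2 ((Nat.gcd_dvd_right ..).trans (Nat.gcd_dvd_left ..))
  have hd1 : (d : ℤ) ∣ b11 := hd ▸ Int.gcd_dvd_left ..
  have hd2 : (d : ℤ) ∣ _ := hd ▸ Int.gcd_dvd_right ..
  have he1 : (e : ℤ) ∣ b21 := he ▸ Int.gcd_dvd_left ..
  have he2 : (e : ℤ) ∣ _ := he ▸ Int.gcd_dvd_right ..
  refine card_coker_aux (q - 1) (by omega) b11 b12 b21 b22 _ k (hgd.trans hd1)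
    (hgd.trans (hd2.trans (Int.gcd_dvd_left ..))) (hge.trans he1)
    (hge.trans (he2.trans (Int.gcd_dvd_left ..)))
    (hgd.trans (hd2.trans (Int.gcd_dvd_right ..))) ?_ hk
  intro m h11 h12 h21 h22 hn
  subst hd he hf
  exact Int.dvd_coe_gcd (Int.dvd_coe_gcd h11 (Int.dvd_coe_gcd h12 hn))
    (Int.dvd_coe_gcd (Int.dvd_coe_gcd h21 (Int.dvd_coe_gcd h22 hn))
      (Int.dvd_coe_gcd (dvd_sub h11 h21) (Int.dvd_coe_gcd (dvd_sub h12 h22) hn)))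
end

section
/- With the trinomial-curve notation, for every integer i one has the sum over j = 0, 1, ..., q−2 of N_{ij} equal to 0. -/
/-!
Write `m = q - 1`. Summing `|C*_{ij}|` over `j` lets the coefficient `ρ ^ j` run once through all
of `Fˣ`. For a fixed pair `(x, y)` the curve equation is linear in that coefficient, with a nonzero
factor, so it has exactly one solution in `Fˣ` when `ρ ^ i x ^ b11 y ^ b12 ≠ 1` and none otherwise.
Hence `∑ j, |C*_{ij}|` is `m ^ 2` minus the size of a fibre of the homomorphism
`(x, y) ↦ x ^ b11 y ^ b12`. Its image is generated by `ρ ^ d` and has order `m / d`, so the fibre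
over `ρ ^ (-i)` has `m * D_d(i)` elements (`card_fibre`). Since `e` and `f` divide `m`, the numbers
`D_e(j)` and `D_f(i - j + w)` each sum to `m` (`sum_dvd_indicator`), and
`m ^ 2 - m D_d(i) - m (m + 2) + m D_d(i) + m + m = 0`.
-/

/-- A residue class modulo `ℓ` meets a full period range `m`, `ℓ ∣ m`, in `m / ℓ` points. -/
lemma sum_dvd_indicator (m ℓ : ℕ) (hℓ : 0 < ℓ) (h : ℓ ∣ m) (c : ℤ) :
    ∑ j ∈ Finset.range m, (if (ℓ : ℤ) ∣ c - (j : ℤ) then (ℓ : ℤ) else 0) = m := by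
  have hℓ' : (ℓ : ℤ) ≠ 0 := by exact_mod_cast hℓ.ne'
  obtain ⟨v, hv⟩ : ∃ v : ℕ, (v : ℤ) = c % ℓ :=
    ⟨(c % ℓ).toNat, Int.toNat_of_nonneg (Int.emod_nonneg _ hℓ')⟩
  have key : ∀ j : ℕ, ((ℓ : ℤ) ∣ c - (j : ℤ)) ↔ j ≡ v [MOD ℓ] := by
    intro j
    rw [← Int.natCast_modEq_iff, hv, ← Int.modEq_iff_dvd]
    simp [Int.ModEq]
  have hc := Nat.count_modEq_card m hℓ v
  rw [Nat.mod_eq_zero_of_dvd h] at hc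
  simp only [not_lt_zero, if_false, add_zero] at hc
  rw [Nat.count_eq_card_filter_range] at hc
  simp_rw [key]
  rw [← Finset.sum_filter, Finset.sum_const, hc, nsmul_eq_mul]
  exact_mod_cast Nat.div_mul_cancel h

/-- The homomorphism `(x, y) ↦ x ^ b * y ^ c`. -/
def monomialHom (G : Type*) [CommGroup G] (b c : ℤ) : G × G →* G where
  toFun z := z.1 ^ b * z.2 ^ c
  map_one' := by simp
  map_mul' x y := by
    simp only [Prod.fst_mul, Prod.snd_mul, mul_zpow]
    exact mul_mul_mul_comm _ _ _ _

lemma range_monomialHom {G : Type*} [CommGroup G] (ρ : G)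
    (hρ : ∀ x : G, x ∈ Subgroup.zpowers ρ) (b c : ℤ) (m : ℕ) (hm : orderOf ρ = m) :
    (monomialHom G b c).range =
      Subgroup.zpowers (ρ ^ (Int.gcd b (Int.gcd c (m : ℤ)))) := by
  apply le_antisymm
  · rintro _ ⟨⟨x, y⟩, rfl⟩
    obtain ⟨s, rfl⟩ := hρ x
    obtain ⟨t, rfl⟩ := hρ y
    obtain ⟨b', hb⟩ : (Int.gcd b (Int.gcd c (m : ℤ)) : ℤ) ∣ b := Int.gcd_dvd_left ..
    obtain ⟨c', hc⟩ : (Int.gcd b (Int.gcd c (m : ℤ)) : ℤ) ∣ c :=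
      (Int.gcd_dvd_right ..).trans (Int.gcd_dvd_left ..)
    refine Subgroup.mem_zpowers_iff.2 ⟨s * b' + t * c', ?_⟩
    simp only [monomialHom, MonoidHom.coe_mk, OneHom.coe_mk]
    rw [← zpow_natCast, ← zpow_mul, ← zpow_mul, ← zpow_mul, ← zpow_add]
    congr 1
    linear_combination (-s) * hb - t * hc
  · rw [Subgroup.zpowers_le]
    have h1 := Int.gcd_eq_gcd_ab b (Int.gcd c (m : ℤ))
    have h2 := Int.gcd_eq_gcd_ab c (m : ℤ)
    generalize Int.gcdA b (Int.gcd c (m : ℤ)) = u at *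
    generalize Int.gcdB b (Int.gcd c (m : ℤ)) = v at *
    generalize Int.gcdA c (m : ℤ) = u' at *
    generalize Int.gcdB c (m : ℤ) = v' at *
    refine ⟨(ρ ^ u, ρ ^ (u' * v)), ?_⟩
    simp only [monomialHom, MonoidHom.coe_mk, OneHom.coe_mk]
    rw [← zpow_natCast, ← zpow_mul, ← zpow_mul, ← zpow_add, zpow_eq_zpow_iff_modEq, hm,
      Int.modEq_iff_dvd]
    exact ⟨v' * v, by linear_combination h1 + v * h2⟩

/-- Over `ρ ^ (-i)` the fibre of `(x, y) ↦ x ^ b * y ^ c` is empty unless `d ∣ i`, in which case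
it is a coset of the kernel, of size `m ^ 2 / (m / d) = m * d`. -/
lemma card_fibre {G : Type*} [CommGroup G] [Fintype G] [DecidableEq G] (ρ : G)
    (hρ : ∀ x : G, x ∈ Subgroup.zpowers ρ) (b c : ℤ) (m : ℕ) (hm : Fintype.card G = m)
    (d : ℕ) (hd : d = Int.gcd b (Int.gcd c (m : ℤ))) (i : ℤ) :
    (((Finset.univ : Finset (G × G)).filter
      (fun z => ρ ^ i * (z.1 ^ b * z.2 ^ c) = 1)).card : ℤ)
      = m * (if (d : ℤ) ∣ i then (d : ℤ) else 0) := by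
  have hord : orderOf ρ = m := by
    rw [orderOf_eq_card_of_forall_mem_zpowers hρ, Nat.card_eq_fintype_card, hm]
  have hm0 : 0 < m := hm ▸ Fintype.card_pos
  have hdm : d ∣ m := by
    rw [hd]
    exact_mod_cast (Int.gcd_dvd_right b (Int.gcd c (m : ℤ) : ℤ)).trans
      (Int.gcd_dvd_right c (m : ℤ))
  have hd0 : 0 < d := Nat.pos_of_dvd_of_pos hdm hm0
  have hrange := range_monomialHom ρ hρ b c m hord
  rw [← hd] at hrange
  have hmem : ρ ^ (-i) ∈ (monomialHom G b c).range ↔ (d : ℤ) ∣ i := by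
    rw [hrange, Subgroup.mem_zpowers_iff]
    constructor
    · rintro ⟨t, ht⟩
      rw [← zpow_natCast, ← zpow_mul, zpow_eq_zpow_iff_modEq, hord] at ht
      have h1 := (Int.modEq_iff_dvd.1 ht)
      have h2 : (d : ℤ) ∣ -i - d * t := (Int.natCast_dvd_natCast.2 hdm).trans h1
      have h3 := dvd_add h2 (Dvd.intro t rfl : (d : ℤ) ∣ d * t)
      simpa using h3
    · rintro ⟨t, rfl⟩
      refine ⟨-t, ?_⟩
      rw [← zpow_natCast, ← zpow_mul]
      congr 1
      ring
  have hset : ∀ z : G × G, ρ ^ i * (z.1 ^ b * z.2 ^ c) = 1 ↔ monomialHom G b c z = ρ ^ (-i) := by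
    intro z
    rw [zpow_neg, eq_inv_iff_mul_eq_one, mul_comm]
    rfl
  simp_rw [hset]
  split_ifs with hdi
  · rw [MonoidHom.card_fiber_eq_of_mem_range (monomialHom G b c) (y := 1)
      (hmem.2 hdi) ⟨1, map_one _⟩]
    have h1 := (monomialHom G b c).ker.card_mul_index
    rw [Subgroup.index_ker, hrange, Nat.card_zpowers, orderOf_pow_of_dvd hd0.ne' (hord ▸ hdm),
      hord, Nat.card_prod, Nat.card_eq_fintype_card (α := G), hm] at h1
    have h2 : Nat.card (monomialHom G b c).ker
        = (Finset.univ.filter fun z => monomialHom G b c z = 1).card := by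
      rw [← Fintype.card_subtype, ← Nat.card_eq_fintype_card]
      rfl
    rw [h2] at h1
    obtain ⟨t, rfl⟩ := hdm
    rw [Nat.mul_div_cancel_left _ hd0] at h1
    have ht : 0 < t := Nat.pos_of_mul_pos_left hm0
    have h3 := Nat.eq_of_mul_eq_mul_right ht (h1.trans (by ring : _ = (d * t * d) * t))
    exact_mod_cast h3
  · rw [mul_zero, Nat.cast_eq_zero, Finset.card_eq_zero, Finset.filter_eq_empty_iff]
    intro z _ hz
    exact hdi (hmem.1 ⟨z, hz⟩)

/-- For each i, the sum of N_{ij} over j = 0, …, q-2 is zero. -/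
theorem trinomial_row_sum {p n q : ℕ} (hp : p.Prime) (hn : 0 < n) (hq : q = p ^ n)
    {F : Type*} [Field F] [Fintype F] (hF : Fintype.card F = q)
    (ρ : Fˣ) (hρ : ∀ x : Fˣ, x ∈ Subgroup.zpowers ρ)
    (a11 a12 a21 a22 a31 a32 : ℕ)
    (b11 b12 b21 b22 : ℤ)
    (hb11 : b11 = (a11 : ℤ) - (a31 : ℤ)) (hb12 : b12 = (a12 : ℤ) - (a32 : ℤ))
    (hb21 : b21 = (a21 : ℤ) - (a31 : ℤ)) (hb22 : b22 = (a22 : ℤ) - (a32 : ℤ))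
    (hdet : b11 * b22 - b12 * b21 ≠ 0)
    (d e f k w : ℤ)
    (hd : d = Int.gcd b11 (Int.gcd b12 ((q : ℤ) - 1)))
    (he : e = Int.gcd b21 (Int.gcd b22 ((q : ℤ) - 1)))
    (hf : f = Int.gcd (b11 - b21) (Int.gcd (b12 - b22) ((q : ℤ) - 1)))
    (hk : k = Int.gcd (((q : ℤ) - 1) * (Int.gcd d (Int.gcd e f) : ℕ))
      (b11 * b22 - b12 * b21))
    (hw : w = if Even q then 0 else ((q : ℤ) - 1) / 2)
    (D : ℤ → ℤ → ℤ) (hD : ∀ ℓ i : ℤ, D ℓ i = if ℓ ∣ i then ℓ else 0)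
    (C : ℤ → ℤ → ℕ)
    (hC : ∀ i j : ℤ, C i j = Nat.card {xy : Fˣ × Fˣ //
      ((ρ ^ i : Fˣ) : F) * (xy.1 : F) ^ a11 * (xy.2 : F) ^ a12
        + ((ρ ^ j : Fˣ) : F) * (xy.1 : F) ^ a21 * (xy.2 : F) ^ a22
        = (xy.1 : F) ^ a31 * (xy.2 : F) ^ a32})
    (N : ℤ → ℤ → ℤ)
    (hN : ∀ i j : ℤ, N i j = (C i j : ℤ) - ((q : ℤ) + 1) + D d i + D e j + D f (i - j + w)) :
    ∀ i : ℤ, ∑ j ∈ Finset.range (q - 1), N i (j : ℤ) = 0 := by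
  classical
  intro i
  obtain ⟨m, hm⟩ : ∃ m, m = q - 1 := ⟨_, rfl⟩
  have hq1 : 1 < q := hF ▸ Fintype.one_lt_card
  have hqm : (q : ℤ) - 1 = m := by omega
  have hm0 : 0 < m := by omega
  have hcard : Fintype.card Fˣ = m := by rw [Fintype.card_units, hF, hm]
  have hord : orderOf ρ = m := by
    rw [orderOf_eq_card_of_forall_mem_zpowers hρ, Nat.card_eq_fintype_card, hcard]
  rw [hqm] at hd he hf
  have gcd_dvd : ∀ b c : ℤ, Int.gcd b (Int.gcd c (m : ℤ)) ∣ m := fun b c => by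
    exact_mod_cast (Int.gcd_dvd_right b (Int.gcd c (m : ℤ) : ℤ)).trans
      (Int.gcd_dvd_right c (m : ℤ))
  have hsumD : ∀ b c t : ℤ, ∑ j ∈ Finset.range m,
      D (Int.gcd b (Int.gcd c (m : ℤ))) (t - (j : ℤ)) = m := by
    intro b c t
    simp_rw [hD]
    exact sum_dvd_indicator m _ (Nat.pos_of_dvd_of_pos (gcd_dvd b c) hm0) (gcd_dvd b c) t
  have hsumE : ∑ j ∈ Finset.range m, D e (j : ℤ) = m := by
    rw [← hsumD b21 b22 0, ← he]
    refine Finset.sum_congr rfl fun j _ => ?_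
    simp [hD]
  have hsumF : ∑ j ∈ Finset.range m, D f (i - (j : ℤ) + w) = m := by
    rw [← hsumD (b11 - b21) (b12 - b22) (i + w), ← hf]
    refine Finset.sum_congr rfl fun j _ => ?_
    congr 1
    ring
  -- For fixed `(x, y)` the equation is linear in the coefficient `u` replacing `ρ ^ j`.
  have hlin : ∀ xy : Fˣ × Fˣ,
      (Finset.univ.filter fun u : Fˣ => ((ρ ^ i : Fˣ) : F) * (xy.1 : F) ^ a11 * (xy.2 : F) ^ a12
        + (u : F) * (xy.1 : F) ^ a21 * (xy.2 : F) ^ a22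
        = (xy.1 : F) ^ a31 * (xy.2 : F) ^ a32).card
      = if ρ ^ i * (xy.1 ^ b11 * xy.2 ^ b12) = 1 then 0 else 1 := by
    rintro ⟨x, y⟩
    have hiff : ρ ^ i * (x ^ b11 * y ^ b12) = 1 ↔
        ((ρ ^ i : Fˣ) : F) * (x : F) ^ a11 * (y : F) ^ a12 = (x : F) ^ a31 * (y : F) ^ a32 := by
      have h1 : ρ ^ i * (x ^ b11 * y ^ b12)
          = (ρ ^ i * x ^ a11 * y ^ a12) / (x ^ a31 * y ^ a32) := by
        rw [hb11, hb12, zpow_sub, zpow_sub, div_eq_mul_inv, mul_inv]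
        simp only [zpow_natCast]
        rw [mul_mul_mul_comm]
        simp only [mul_assoc]
      rw [h1, div_eq_one, Units.ext_iff]
      simp only [Units.val_mul, Units.val_pow_eq_pow_val]
    dsimp only
    split_ifs with h
    · rw [hiff] at h
      rw [Finset.card_eq_zero, Finset.filter_eq_empty_iff]
      intro u _ hu
      rw [h, add_eq_left] at hu
      simp at hu
    · rw [hiff] at h
      have hne : (x : F) ^ a31 * (y : F) ^ a32
          - ((ρ ^ i : Fˣ) : F) * (x : F) ^ a11 * (y : F) ^ a12 ≠ 0 :=
        sub_ne_zero.2 fun h' => h h'.symm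
      rw [Finset.card_eq_one]
      refine ⟨Units.mk0 _ hne / (x ^ a21 * y ^ a22), ?_⟩
      ext u
      rw [Finset.mem_filter, Finset.mem_singleton, eq_div_iff_mul_eq', Units.ext_iff]
      simp only [Finset.mem_univ, true_and, Units.val_mul, Units.val_pow_eq_pow_val,
        Units.val_mk0]
      constructor
      · intro hu
        linear_combination hu
      · intro hu
        linear_combination hu
  have hsumC : ∑ j ∈ Finset.range m, (C i (j : ℤ) : ℤ) = (m : ℤ) ^ 2 - m * D d i := by
    have hfib := card_fibre ρ hρ b11 b12 m hcard _ rfl i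
    rw [← hd, ← hD] at hfib
    have h1 : ∑ j ∈ Finset.range m, C i (j : ℤ) = ∑ u : Fˣ,
        (Finset.univ.filter fun xy : Fˣ × Fˣ =>
          ((ρ ^ i : Fˣ) : F) * (xy.1 : F) ^ a11 * (xy.2 : F) ^ a12
          + (u : F) * (xy.1 : F) ^ a21 * (xy.2 : F) ^ a22
          = (xy.1 : F) ^ a31 * (xy.2 : F) ^ a32).card := by
      rw [← IsCyclic.image_range_orderOf hρ, Finset.sum_image, hord]
      · refine Finset.sum_congr rfl fun j _ => ?_
        rw [hC, Nat.card_eq_fintype_card, Fintype.card_subtype, zpow_natCast]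
      · intro s hs t ht hst
        exact pow_injOn_Iio_orderOf (by simpa using hs) (by simpa using ht) hst
    have h2 : (∑ j ∈ Finset.range m, C i (j : ℤ))
        + (Finset.univ.filter fun z : Fˣ × Fˣ => ρ ^ i * (z.1 ^ b11 * z.2 ^ b12) = 1).card
        = m ^ 2 := by
      rw [h1]
      simp_rw [Finset.card_filter]
      rw [Finset.sum_comm, ← Finset.sum_add_distrib]
      simp_rw [← Finset.card_filter, hlin]
      rw [Finset.sum_congr rfl (g := fun _ => 1) (fun z _ => by split_ifs <;> rfl)]
      simp [Fintype.card_prod, hcard, sq]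
    rw [← hfib]
    have h3 := congrArg (Nat.cast : ℕ → ℤ) h2
    push_cast at h3 ⊢
    linarith
  simp_rw [hN]
  rw [← hm]
  simp only [Finset.sum_add_distrib, Finset.sum_sub_distrib, hsumC, hsumE, hsumF,
    Finset.sum_const, Finset.card_range, nsmul_eq_mul]
  linear_combination (-(m : ℤ)) * hqm
end

section
/- With the trinomial-curve notation, for every integer j one has the sum over i = 0, 1, ..., q−2 of N_{ij} equal to 0. -/
/-!
Put `m = q - 1`. Once `(x, y)` is fixed, the trinomial equation is linear in the unit `u = ρ ^ i`, which
runs once through `Fˣ` as `i` runs through `0, …, m - 1`. It has exactly one solution `u` unless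
`ρ ^ j * x ^ a21 * y ^ a22 = x ^ a31 * y ^ a32`, when it has none (`card_linear`). Hence `∑ i, |C i j|`
is `m ^ 2` minus the number of `(x, y)` with `x ^ b21 * y ^ b22 = ρ ^ (-j)`. The left-hand side is a
homomorphism from `Fˣ × Fˣ` onto the subgroup of index `e`, so this number is `m * D e j`
(`card_fiber`). Both `d` and `f` divide `m`, so `D d` and `D f` each sum to `m` over any `m`
consecutive integers (`sum_ite_dvd`). The total is
`m ^ 2 - m * D e j - m * (q + 1) + m + m * D e j + m = 0`.
-/

/-- A window of `m` consecutive integers holds `m / d` multiples of `d`, when `d ∣ m`. -/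
lemma sum_ite_dvd (m : ℕ) (d c : ℤ) (hd : 0 < d) (hdm : d ∣ (m : ℤ)) :
    ∑ i ∈ Finset.range m, (if d ∣ (i : ℤ) + c then d else 0) = (m : ℤ) := by
  obtain ⟨t, ht⟩ := hdm
  have ht0 : 0 ≤ t := by
    by_contra h
    nlinarith [Int.natCast_nonneg m]
  have h1 : ∑ i ∈ Finset.range m, (if d ∣ (i : ℤ) + c then d else 0)
      = ∑ i ∈ Finset.Ico (0 : ℤ) m, (if i ≡ -c [ZMOD d] then d else 0) := by
    refine Finset.sum_bij (fun i _ => (i : ℤ)) ?_ ?_ ?_ ?_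
    · intro a ha
      simpa using ha
    · intro a _ b _ h
      exact_mod_cast h
    · intro b hb
      rw [Finset.mem_Ico] at hb
      exact ⟨b.toNat, by rw [Finset.mem_range]; omega, by omega⟩
    · intro a _
      have : d ∣ (a : ℤ) + c ↔ (a : ℤ) ≡ -c [ZMOD d] := by
        rw [Int.modEq_comm, Int.modEq_iff_dvd]
        simp
      simp [this]
  rw [h1, ← Finset.sum_filter, Finset.sum_const, nsmul_eq_mul,
    Int.Ico_filter_modEq_card _ _ hd]
  have h2 : (((m : ℤ) : ℚ) - ((-c : ℤ) : ℚ)) / (d : ℚ)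
      = (((0 : ℤ) : ℚ) - ((-c : ℤ) : ℚ)) / (d : ℚ) + (t : ℤ) := by
    have : (d : ℚ) ≠ 0 := by exact_mod_cast hd.ne'
    rw [ht]
    field_simp
    push_cast
    ring
  rw [h2, Int.ceil_add_intCast, add_sub_cancel_left, max_eq_left ht0, ht, mul_comm]

/-- The fibre of `(x, y) ↦ x ^ b * y ^ c` over `ρ ^ (-j)` in a cyclic group of order `m`: the image
is the subgroup generated by `ρ ^ e`, which has index `e`. -/
lemma card_fiber {G : Type*} [CommGroup G] [Fintype G] (ρ : G)
    (hρ : ∀ x : G, x ∈ Subgroup.zpowers ρ) (b c j e : ℤ)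
    (he : e = Int.gcd b (Int.gcd c (Nat.card G : ℤ))) :
    (Nat.card {xy : G × G // xy.1 ^ b * xy.2 ^ c = ρ ^ (-j)} : ℤ)
      = Nat.card G * (if e ∣ j then e else 0) := by
  classical
  have hord : orderOf ρ = Nat.card G := orderOf_eq_card_of_forall_mem_zpowers hρ
  have hmpos : 0 < Nat.card G := Nat.card_pos
  have heb : e ∣ b := he ▸ Int.gcd_dvd_left _ _
  have hec' : e ∣ (Int.gcd c (Nat.card G : ℤ) : ℤ) := he ▸ Int.gcd_dvd_right _ _
  have hec : e ∣ c := hec'.trans (Int.gcd_dvd_left _ _)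
  have hem : e ∣ (Nat.card G : ℤ) := hec'.trans (Int.gcd_dvd_right _ _)
  let φ : G × G →* G := (zpowGroupHom b).coprod (zpowGroupHom c)
  have hφ : ∀ xy : G × G, φ xy = xy.1 ^ b * xy.2 ^ c := fun xy => by
    simp [φ, MonoidHom.coprod_apply]
  -- By Bézout, `ρ ^ e` is a value of `φ`.
  have hrange : φ.range = Subgroup.zpowers (ρ ^ e) := by
    apply le_antisymm
    · rintro _ ⟨⟨x, y⟩, rfl⟩
      obtain ⟨s, rfl⟩ := hρ x
      obtain ⟨t, rfl⟩ := hρ y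
      obtain ⟨b', hb'⟩ := heb
      obtain ⟨c', hc'⟩ := hec
      refine ⟨b' * s + c' * t, ?_⟩
      simp only [hφ, ← zpow_mul, ← zpow_add]
      rw [hb', hc']
      congr 1
      ring
    · rw [Subgroup.zpowers_le]
      have h1 := Int.gcd_eq_gcd_ab b (Int.gcd c (Nat.card G : ℤ))
      have h2 := Int.gcd_eq_gcd_ab c (Nat.card G : ℤ)
      rw [← he] at h1
      generalize Int.gcdA b (Int.gcd c (Nat.card G : ℤ)) = u at h1
      generalize Int.gcdB b (Int.gcd c (Nat.card G : ℤ)) = v at h1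
      generalize Int.gcdA c (Nat.card G : ℤ) = u' at h2
      generalize Int.gcdB c (Nat.card G : ℤ) = v' at h2
      refine ⟨(ρ ^ u, ρ ^ (u' * v)), ?_⟩
      have hm1 : ρ ^ ((Nat.card G : ℤ) * (v' * v)) = 1 := by
        rw [zpow_mul, zpow_natCast, pow_card_eq_one', one_zpow]
      have h3 : e = u * b + u' * v * c + (Nat.card G : ℤ) * (v' * v) := by
        rw [h1, h2]
        ring
      rw [hφ, h3, zpow_add, hm1, mul_one, zpow_add, zpow_mul ρ u b, zpow_mul ρ (u' * v) c]
  have hcardrange : (Nat.card φ.range : ℤ) * e = Nat.card G := by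
    have h0 : 0 ≤ e := he ▸ Int.natCast_nonneg _
    obtain ⟨e', rfl⟩ := Int.eq_ofNat_of_zero_le h0
    have hd : e' ∣ Nat.card G := by exact_mod_cast hem
    have hne : e' ≠ 0 := by
      rintro rfl
      rw [zero_dvd_iff] at hd
      omega
    rw [hrange, Nat.card_zpowers, zpow_natCast,
      orderOf_pow_of_dvd hne (hord ▸ hd), hord]
    exact_mod_cast Nat.div_mul_cancel hd
  have hker : (Nat.card φ.ker : ℤ) * Nat.card φ.range = Nat.card G * Nat.card G := by
    have h := φ.ker.card_mul_index
    rw [Subgroup.index_ker, Nat.card_prod] at h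
    exact_mod_cast h
  have hkere : (Nat.card φ.ker : ℤ) = Nat.card G * e := by
    have hne : (Nat.card φ.range : ℤ) ≠ 0 := by
      have : 0 < Nat.card φ.range := Nat.card_pos
      omega
    apply mul_right_cancel₀ hne
    rw [hker, mul_assoc, mul_comm e, hcardrange]
  split_ifs with hj
  · have hmem : ρ ^ (-j) ∈ φ.range := by
      rw [hrange]
      obtain ⟨t, rfl⟩ := hj
      exact ⟨-t, by simp only [← zpow_mul]; congr 1; ring⟩
    obtain ⟨z, hz⟩ := hmem
    rw [← hkere]
    norm_cast
    refine Nat.card_congr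
      { toFun := fun xy => ⟨xy.1 * z⁻¹, ?_⟩
        invFun := fun k => ⟨k.1 * z, ?_⟩
        left_inv := fun xy => by simp
        right_inv := fun k => by simp }
    · rw [MonoidHom.mem_ker, map_mul, map_inv, hz, hφ, xy.2, mul_inv_cancel]
    · rw [← hφ, map_mul, k.2, one_mul, hz]
  · have : IsEmpty {xy : G × G // xy.1 ^ b * xy.2 ^ c = ρ ^ (-j)} := by
      refine ⟨fun xy => hj ?_⟩
      have hmem : ρ ^ (-j) ∈ φ.range := ⟨xy.1, by rw [hφ, xy.2]⟩
      rw [hrange] at hmem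
      obtain ⟨t, ht⟩ := hmem
      simp only [← zpow_mul] at ht
      rw [← mul_inv_eq_one, ← zpow_neg, ← zpow_add, ← orderOf_dvd_iff_zpow_eq_one, hord] at ht
      have h := hem.trans ht
      rw [neg_neg] at h
      exact (dvd_add_right (dvd_mul_right e t)).1 h
    rw [Nat.card_of_isEmpty, mul_zero, Nat.cast_zero]

lemma card_linear {F : Type*} [Field F] [Fintype F] [DecidableEq F] (A : Fˣ) (B M : F) :
    (∑ u : Fˣ, if (u : F) * (A : F) + B = M then (1 : ℤ) else 0)
      = 1 - if B = M then 1 else 0 := by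
  by_cases h : B = M
  · simp [h]
  · have h' : M - B ≠ 0 := sub_ne_zero.2 (Ne.symm h)
    have key : ∀ u : Fˣ, (u : F) * (A : F) + B = M ↔ u = Units.mk0 (M - B) h' * A⁻¹ := fun u => by
      rw [eq_mul_inv_iff_mul_eq, Units.ext_iff, ← eq_sub_iff_add_eq]
      simp
    simp [key, h]

/-- A sum over `0 ≤ i < |G|` of a function of `ρ ^ i` is a sum over the cyclic group `G`. -/
lemma sum_range_zpow {G : Type*} [Group G] [Fintype G] (ρ : G)
    (hρ : ∀ x : G, x ∈ Subgroup.zpowers ρ) (g : G → ℤ) :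
    ∑ i ∈ Finset.range (Nat.card G), g (ρ ^ (i : ℤ)) = ∑ u : G, g u := by
  classical
  have hord : orderOf ρ = Nat.card G := orderOf_eq_card_of_forall_mem_zpowers hρ
  refine Finset.sum_bij (fun i _ => ρ ^ (i : ℤ)) (by simp) ?_ ?_ (by simp)
  · intro a ha b hb h
    simp only [zpow_natCast] at h
    rw [Finset.mem_range, ← hord] at ha hb
    exact pow_injOn_Iio_orderOf ha hb h
  · intro u _
    have h : u ∈ Submonoid.powers ρ := mem_powers_iff_mem_zpowers.2 (hρ u)
    rw [mem_powers_iff_mem_range_orderOf, Finset.mem_image] at h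
    obtain ⟨i, hi, rfl⟩ := h
    exact ⟨i, hord ▸ hi, by simp⟩

/-- For each j, the sum of N_{ij} over i = 0, …, q-2 is zero. -/
theorem trinomial_col_sum {p n q : ℕ} (hp : p.Prime) (hn : 0 < n) (hq : q = p ^ n)
    {F : Type*} [Field F] [Fintype F] (hF : Fintype.card F = q)
    (ρ : Fˣ) (hρ : ∀ x : Fˣ, x ∈ Subgroup.zpowers ρ)
    (a11 a12 a21 a22 a31 a32 : ℕ)
    (b11 b12 b21 b22 : ℤ)
    (hb11 : b11 = (a11 : ℤ) - (a31 : ℤ)) (hb12 : b12 = (a12 : ℤ) - (a32 : ℤ))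
    (hb21 : b21 = (a21 : ℤ) - (a31 : ℤ)) (hb22 : b22 = (a22 : ℤ) - (a32 : ℤ))
    (hdet : b11 * b22 - b12 * b21 ≠ 0)
    (d e f k w : ℤ)
    (hd : d = Int.gcd b11 (Int.gcd b12 ((q : ℤ) - 1)))
    (he : e = Int.gcd b21 (Int.gcd b22 ((q : ℤ) - 1)))
    (hf : f = Int.gcd (b11 - b21) (Int.gcd (b12 - b22) ((q : ℤ) - 1)))
    (hk : k = Int.gcd (((q : ℤ) - 1) * (Int.gcd d (Int.gcd e f) : ℕ))
      (b11 * b22 - b12 * b21))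
    (hw : w = if Even q then 0 else ((q : ℤ) - 1) / 2)
    (D : ℤ → ℤ → ℤ) (hD : ∀ ℓ i : ℤ, D ℓ i = if ℓ ∣ i then ℓ else 0)
    (C : ℤ → ℤ → ℕ)
    (hC : ∀ i j : ℤ, C i j = Nat.card {xy : Fˣ × Fˣ //
      ((ρ ^ i : Fˣ) : F) * (xy.1 : F) ^ a11 * (xy.2 : F) ^ a12
        + ((ρ ^ j : Fˣ) : F) * (xy.1 : F) ^ a21 * (xy.2 : F) ^ a22
        = (xy.1 : F) ^ a31 * (xy.2 : F) ^ a32})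
    (N : ℤ → ℤ → ℤ)
    (hN : ∀ i j : ℤ, N i j = (C i j : ℤ) - ((q : ℤ) + 1) + D d i + D e j + D f (i - j + w)) :
    ∀ j : ℤ, ∑ i ∈ Finset.range (q - 1), N (i : ℤ) j = 0 := by
  classical
  intro j
  have hm : Nat.card Fˣ = q - 1 := by rw [Nat.card_units, Nat.card_eq_fintype_card, hF]
  have hq1 : 1 < q := hF ▸ Fintype.one_lt_card
  have hmq : ((Nat.card Fˣ : ℕ) : ℤ) = (q : ℤ) - 1 := by omega
  have gcd_pos : ∀ x y : ℤ, 0 < (Int.gcd x (Int.gcd y ((q : ℤ) - 1)) : ℤ) := fun x y => by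
    have h1 : 0 < Int.gcd y ((q : ℤ) - 1) := Int.gcd_pos_of_ne_zero_right _ (by omega)
    exact_mod_cast Int.gcd_pos_of_ne_zero_right x (Int.natCast_ne_zero.2 h1.ne')
  have gcd_dvd : ∀ x y : ℤ,
      (Int.gcd x (Int.gcd y ((q : ℤ) - 1)) : ℤ) ∣ (Nat.card Fˣ : ℤ) := fun x y => by
    rw [hmq]
    exact (Int.gcd_dvd_right _ _).trans (Int.gcd_dvd_right _ _)
  have hsd : ∑ i ∈ Finset.range (q - 1), D d (i : ℤ) = (q : ℤ) - 1 := by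
    rw [← hmq, ← hm, ← sum_ite_dvd _ d 0 (hd ▸ gcd_pos _ _) (hd ▸ gcd_dvd _ _)]
    simp [hD]
  have hsf : ∑ i ∈ Finset.range (q - 1), D f ((i : ℤ) - j + w) = (q : ℤ) - 1 := by
    rw [← hmq, ← hm, ← sum_ite_dvd _ f (-j + w) (hf ▸ gcd_pos _ _) (hf ▸ gcd_dvd _ _)]
    refine Finset.sum_congr rfl fun i _ => ?_
    rw [hD, sub_eq_add_neg, add_assoc]
  have hfib := card_fiber ρ hρ b21 b22 j e (by rw [he, hmq])
  rw [← hD, hmq] at hfib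
  -- Dividing by `x ^ a31 * y ^ a32` turns the degenerate pairs into a fibre of `x ^ b21 * y ^ b22`.
  have hdeg : ∀ x y : Fˣ, ((ρ ^ j : Fˣ) : F) * (x : F) ^ a21 * (y : F) ^ a22
      = (x : F) ^ a31 * (y : F) ^ a32 ↔ x ^ b21 * y ^ b22 = ρ ^ (-j) := fun x y => by
    have h1 : ((ρ ^ j : Fˣ) : F) * (x : F) ^ a21 * (y : F) ^ a22
        = (x : F) ^ a31 * (y : F) ^ a32 ↔ ρ ^ j * x ^ a21 * y ^ a22 = x ^ a31 * y ^ a32 := by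
      rw [Units.ext_iff]
      push_cast
      rfl
    rw [h1, hb21, hb22, zpow_sub, zpow_sub, zpow_neg, eq_inv_iff_mul_eq_one]
    simp only [zpow_natCast]
    rw [← mul_inv_eq_one (b := x ^ a31 * y ^ a32)]
    have h2 : ρ ^ j * x ^ a21 * y ^ a22 * (x ^ a31 * y ^ a32)⁻¹
        = x ^ a21 * (x ^ a31)⁻¹ * (y ^ a22 * (y ^ a32)⁻¹) * ρ ^ j := by
      rw [mul_inv]
      ac_rfl
    rw [h2]
  have hsC : ∑ i ∈ Finset.range (q - 1), (C (i : ℤ) j : ℤ)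
      = ((q : ℤ) - 1) * ((q : ℤ) - 1) - ((q : ℤ) - 1) * D e j := by
    simp only [hC]
    rw [← hm, sum_range_zpow ρ hρ (fun u => (Nat.card {xy : Fˣ × Fˣ //
      (u : F) * (xy.1 : F) ^ a11 * (xy.2 : F) ^ a12
        + ((ρ ^ j : Fˣ) : F) * (xy.1 : F) ^ a21 * (xy.2 : F) ^ a22
        = (xy.1 : F) ^ a31 * (xy.2 : F) ^ a32} : ℤ)), ← hfib, ← hmq]
    simp only [Nat.card_eq_fintype_card, Fintype.card_subtype, Finset.card_filter, Nat.cast_sum,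
      Nat.cast_ite, Nat.cast_one, Nat.cast_zero]
    rw [Finset.sum_comm]
    have hin : ∀ xy : Fˣ × Fˣ, (∑ u : Fˣ, if (u : F) * (xy.1 : F) ^ a11 * (xy.2 : F) ^ a12
        + ((ρ ^ j : Fˣ) : F) * (xy.1 : F) ^ a21 * (xy.2 : F) ^ a22
        = (xy.1 : F) ^ a31 * (xy.2 : F) ^ a32 then (1 : ℤ) else 0)
        = 1 - if xy.1 ^ b21 * xy.2 ^ b22 = ρ ^ (-j) then 1 else 0 := fun xy => by
      have h := card_linear (xy.1 ^ a11 * xy.2 ^ a12)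
        (((ρ ^ j : Fˣ) : F) * (xy.1 : F) ^ a21 * (xy.2 : F) ^ a22)
        ((xy.1 : F) ^ a31 * (xy.2 : F) ^ a32)
      simp only [Units.val_mul, Units.val_pow_eq_pow_val, ← mul_assoc, hdeg] at h
      exact h
    rw [Finset.sum_congr rfl fun xy _ => hin xy, Finset.sum_sub_distrib]
    simp
  simp only [hN, Finset.sum_add_distrib, Finset.sum_sub_distrib, hsC, hsd, hsf,
    Finset.sum_const, Finset.card_range, nsmul_eq_mul]
  rw [Nat.cast_sub hq1.le]
  push_cast
  ring
end

section
/- With the trinomial-curve notation, for every integer r, the sum of N_{ij} over all pairs (i,j) with 0 ≤ i, j ≤ q−2 and i − j ≡ r (mod q−1) equals 0. -/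
/-!
Put `m = q - 1`. For fixed `i`, exactly one `j` in `0, …, m - 1` satisfies `i - j ≡ r (mod m)`, and
`N i j` depends on `j` only modulo `m`, so the double sum is `∑ i < m, N i (i - r)`.

Summing the point counts over `i` counts, for each `(x, y)`, the `i < m` with
`ρ ^ i * (x ^ a11 * y ^ a12 + ρ ^ (-r) * x ^ a21 * y ^ a22) = x ^ a31 * y ^ a32`. There is exactly
one such `i` unless the bracket vanishes, and none if it does. Since `ρ ^ w = -1`, the bracket
vanishes exactly on a fibre of the homomorphism `(x, y) ↦ x ^ (a11 - a21) * y ^ (a12 - a22)`, which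
has `m * D_f(r + w)` points (`card_fiber_powHom`: the image is generated by `ρ ^ f`). Hence the
point counts contribute `m ^ 2 - m * D_f(r + w)`. The terms `D_d` and `D_e` contribute `m` each
(`sum_dvd_sub`), the terms `D_f` contribute `m * D_f(r + w)`, and `-(q + 1) = -(m + 2)` contributes
`-m ^ 2 - 2 * m`; the total is `0`.
-/

/-- A complete residue system `0, …, m - 1` contains exactly one element congruent to `t`. -/
lemma sum_range_ite_dvd {m : ℕ} (hm : 0 < m) (t : ℤ) (g : ℕ → ℤ) :
    ∑ j ∈ Finset.range m, (if (m : ℤ) ∣ t - j then g j else 0) = g (t % m).toNat := by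
  have hm' : (0 : ℤ) < m := by exact_mod_cast hm
  have h0 := Int.emod_nonneg t hm'.ne'
  have h1 := Int.emod_lt_of_pos t hm'
  rw [Finset.sum_eq_single_of_mem (t % m).toNat]
  · rw [if_pos]
    rw [Int.toNat_of_nonneg h0]
    exact Int.dvd_self_sub_emod
  · rw [Finset.mem_range]; omega
  · intro j hj hne
    rw [if_neg]
    intro hdvd
    apply hne
    have h2 : t % m = (j : ℤ) % m := Int.emod_eq_emod_iff_emod_sub_eq_zero.2
      (Int.emod_eq_zero_of_dvd hdvd)
    rw [Finset.mem_range] at hj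
    rw [h2, Int.emod_eq_of_lt (by omega) (by omega)]
    simp

lemma sum_dvd_sub {e : ℕ} (he : 0 < e) (c : ℕ) (r : ℤ) :
    ∑ i ∈ Finset.range (e * c), (if (e : ℤ) ∣ (i : ℤ) - r then (e : ℤ) else 0) = e * c := by
  induction c with
  | zero => simp
  | succ c ih =>
    rw [Nat.mul_succ, Finset.sum_range_add, ih]
    have h : ∀ i : ℕ, ((e : ℤ) ∣ ((e * c + i : ℕ) : ℤ) - r) ↔ (e : ℤ) ∣ r - i := by
      intro i
      rw [← dvd_neg, show -(((e * c + i : ℕ) : ℤ) - r) = (r - i) - e * c by push_cast; ring]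
      exact dvd_sub_left (dvd_mul_right _ _)
    simp_rw [h]
    rw [sum_range_ite_dvd he r (fun _ => (e : ℤ))]
    push_cast; ring

/-- The homomorphism `(x, y) ↦ x ^ u * y ^ v`. -/
def powHom (G : Type*) [CommGroup G] (u v : ℤ) : G × G →* G where
  toFun z := z.1 ^ u * z.2 ^ v
  map_one' := by simp
  map_mul' a b := by simp only [Prod.fst_mul, Prod.snd_mul, mul_zpow]; exact mul_mul_mul_comm ..

lemma range_powHom {G : Type*} [CommGroup G] [Fintype G] (ρ : G)
    (hρ : ∀ x : G, x ∈ Subgroup.zpowers ρ) (u v : ℤ) :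
    (powHom G u v).range
      = Subgroup.zpowers (ρ ^ (Int.gcd u (Int.gcd v (Fintype.card G)) : ℕ)) := by
  set g : ℕ := Int.gcd v (Fintype.card G) with hg
  set f : ℕ := Int.gcd u g with hf
  have hfu : (f : ℤ) ∣ u := Int.gcd_dvd_left ..
  have hfg : (f : ℤ) ∣ g := Int.gcd_dvd_right ..
  have hfv : (f : ℤ) ∣ v := hfg.trans (Int.gcd_dvd_left ..)
  apply le_antisymm
  · rintro _ ⟨⟨x, y⟩, rfl⟩
    obtain ⟨s, rfl⟩ := hρ x
    obtain ⟨t, rfl⟩ := hρ y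
    obtain ⟨u', hu'⟩ := hfu
    obtain ⟨v', hv'⟩ := hfv
    refine ⟨s * u' + t * v', ?_⟩
    simp only [powHom, MonoidHom.coe_mk, OneHom.coe_mk]
    rw [← zpow_natCast, ← zpow_mul, ← zpow_mul, ← zpow_mul, ← zpow_add]
    congr 1
    rw [hu', hv']; ring
  · rw [Subgroup.zpowers_le]
    refine ⟨(ρ ^ Int.gcdA u g, ρ ^ (Int.gcdB u g * Int.gcdA v (Fintype.card G))), ?_⟩
    simp only [powHom, MonoidHom.coe_mk, OneHom.coe_mk]
    have h1 : (f : ℤ) = u * Int.gcdA u g + g * Int.gcdB u g := Int.gcd_eq_gcd_ab ..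
    have h2 : (g : ℤ) = v * Int.gcdA v (Fintype.card G)
      + (Fintype.card G : ℤ) * Int.gcdB v (Fintype.card G) := Int.gcd_eq_gcd_ab ..
    have h3 : (ρ ^ (Fintype.card G : ℤ) : G) = 1 := by rw [zpow_natCast]; exact pow_card_eq_one
    have h4 : (f : ℤ) = Int.gcdA u g * u + Int.gcdB u g * Int.gcdA v (Fintype.card G) * v
        + (Fintype.card G : ℤ) * (Int.gcdB v (Fintype.card G) * Int.gcdB u g) := by
      linear_combination h1 + Int.gcdB u g * h2
    rw [← zpow_natCast ρ f, h4, zpow_add, zpow_mul ρ (Fintype.card G : ℤ), h3, one_zpow, mul_one,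
      zpow_add, ← zpow_mul, ← zpow_mul]

lemma orderOf_generator {G : Type*} [CommGroup G] [Fintype G] (ρ : G)
    (hρ : ∀ x : G, x ∈ Subgroup.zpowers ρ) : orderOf ρ = Fintype.card G := by
  rw [← Nat.card_eq_fintype_card]
  exact orderOf_eq_card_of_forall_mem_zpowers hρ

/-- In a cyclic group of order `m`, the equation `x ^ u * y ^ v = ρ ^ t` has `m * f` solutions when
`f = gcd(u, v, m)` divides `t`, and none otherwise. -/
lemma card_fiber_powHom {G : Type*} [CommGroup G] [Fintype G] [DecidableEq G] (ρ : G)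
    (hρ : ∀ x : G, x ∈ Subgroup.zpowers ρ) (u v t : ℤ) (f : ℕ)
    (hf : f = Int.gcd u (Int.gcd v (Fintype.card G))) :
    ({z : G × G | z.1 ^ u * z.2 ^ v = ρ ^ t} : Finset (G × G)).card
      = Fintype.card G * (if (f : ℤ) ∣ t then f else 0) := by
  have hm : 0 < Fintype.card G := Fintype.card_pos
  have hfm : f ∣ Fintype.card G := by
    have h1 : (f : ℤ) ∣ (Int.gcd v (Fintype.card G) : ℤ) := hf ▸ Int.gcd_dvd_right ..
    exact_mod_cast h1.trans (Int.gcd_dvd_right ..)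
  have hf0 : 0 < f := Nat.pos_of_dvd_of_pos hfm hm
  have hord := orderOf_generator ρ hρ
  have hrange := range_powHom ρ hρ u v
  rw [← hf] at hrange
  have hmem : ρ ^ t ∈ (powHom G u v).range ↔ (f : ℤ) ∣ t := by
    rw [hrange]
    constructor
    · rintro ⟨s, hs⟩
      simp only at hs
      rw [← zpow_natCast, ← zpow_mul, zpow_eq_zpow_iff_modEq, hord] at hs
      have h1 : (f : ℤ) ∣ t - f * s := (Int.natCast_dvd_natCast.2 hfm).trans hs.dvd
      exact (dvd_sub_left (dvd_mul_right _ _)).1 h1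
    · rintro ⟨s, rfl⟩
      exact ⟨s, by simp [zpow_mul]⟩
  split_ifs with h
  · have hfib : ({z : G × G | z.1 ^ u * z.2 ^ v = ρ ^ t} : Finset (G × G)).card
        = Nat.card (powHom G u v).ker := by
      have := MonoidHom.card_fiber_eq_of_mem_range (powHom G u v) (hmem.2 h)
        (one_mem (powHom G u v).range)
      rw [Nat.card_eq_fintype_card, Fintype.card_subtype]
      convert this using 2
      · ext z; simp only [Finset.mem_filter]; rfl
      · ext z; simp [MonoidHom.mem_ker]
    rw [hfib]
    have h1 := (powHom G u v).ker.card_mul_index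
    rw [Subgroup.index_ker, hrange, Nat.card_zpowers, orderOf_pow, hord,
      Nat.gcd_eq_right hfm, Nat.card_prod, Nat.card_eq_fintype_card (α := G)] at h1
    obtain ⟨c, hc⟩ := hfm
    rw [hc, Nat.mul_div_cancel_left _ hf0] at h1
    have hc0 : 0 < c := by
      rcases Nat.eq_zero_or_pos c with h0 | h0
      · subst h0; omega
      · exact h0
    rw [hc]
    apply Nat.eq_of_mul_eq_mul_right hc0
    rw [h1]; ring
  · rw [mul_zero, Finset.card_eq_zero, Finset.filter_eq_empty_iff]
    intro z _ hz
    exact h (hmem.1 ⟨z, hz⟩)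

/-- `ρ ^ w = -1` for a generator `ρ` of `Fˣ`. -/
lemma generator_zpow_w {F : Type*} [Field F] [Fintype F] (ρ : Fˣ)
    (hord : orderOf ρ = Fintype.card F - 1) (w : ℤ)
    (hw : w = if Even (Fintype.card F) then 0 else ((Fintype.card F : ℤ) - 1) / 2) :
    ρ ^ w = -1 := by
  have hcard : 1 < Fintype.card F := Fintype.one_lt_card
  split_ifs at hw with h
  · subst hw
    have : CharP F 2 := by
      rw [← (FiniteField.even_card_iff_char_two (F := F)).2 (Nat.even_iff.1 h)]
      exact ringChar.charP F
    ext
    simp [CharTwo.neg_eq]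
  · rw [Nat.not_even_iff_odd] at h
    obtain ⟨c, hc⟩ := h
    have hwc : w = c := by rw [hw, hc]; push_cast; omega
    have hsq : (ρ ^ w) * (ρ ^ w) = 1 := by
      rw [← zpow_add, hwc, ← Nat.cast_add, zpow_natCast, ← orderOf_dvd_iff_pow_eq_one, hord, hc]
      exact dvd_of_eq (by omega)
    have hne : ρ ^ w ≠ 1 := by
      rw [hwc, zpow_natCast, Ne, ← orderOf_dvd_iff_pow_eq_one, hord]
      intro hd
      have := Nat.le_of_dvd (by omega) hd
      omega
    have h2 : ((ρ ^ w : Fˣ) : F) * ((ρ ^ w : Fˣ) : F) = 1 := by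
      rw [← Units.val_mul, hsq, Units.val_one]
    ext
    rcases mul_self_eq_one_iff.1 h2 with h3 | h3
    · exact absurd (Units.ext h3) hne
    · simpa using h3

/-- Every unit `B` is `ρ ^ i * A` for exactly one `i` in `0, …, m - 1`, provided `A ≠ 0`. -/
lemma sum_generator_mul_eq {F : Type*} [Field F] [Fintype F] [DecidableEq F] (ρ : Fˣ)
    (hρ : ∀ x : Fˣ, x ∈ Subgroup.zpowers ρ) {m : ℕ} (hm : 0 < m) (hord : orderOf ρ = m)
    (A B : F) (hB : B ≠ 0) :
    ∑ i ∈ Finset.range m, (if ((ρ ^ i : Fˣ) : F) * A = B then (1 : ℤ) else 0)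
      = 1 - (if A = 0 then 1 else 0) := by
  split_ifs with hA
  · subst hA
    simp [hB.symm]
  · obtain ⟨t, ht⟩ := hρ (Units.mk0 B hB / Units.mk0 A hA)
    simp only at ht
    have key : ∀ i : ℕ, ((ρ ^ i : Fˣ) : F) * A = B ↔ (m : ℤ) ∣ t - i := by
      intro i
      rw [← hord, ← Int.modEq_iff_dvd, ← zpow_eq_zpow_iff_modEq, ht, zpow_natCast,
        eq_div_iff_mul_eq', Units.ext_iff]
      simp [mul_comm]
    simp_rw [key]
    rw [sum_range_ite_dvd hm t (fun _ => 1)]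
    simp

/-- The total number of points on the curves `C i (i - r)`, `0 ≤ i < m`. -/
lemma sum_card_curves {F : Type*} [Field F] [Fintype F] [DecidableEq F] (ρ : Fˣ)
    (hρ : ∀ x : Fˣ, x ∈ Subgroup.zpowers ρ) {m : ℕ} (hm : m = Fintype.card Fˣ)
    (a11 a12 a21 a22 a31 a32 : ℕ) (r w : ℤ) (hw : ρ ^ w = -1) (f : ℕ)
    (hf : f = Int.gcd ((a11 : ℤ) - a21) (Int.gcd ((a12 : ℤ) - a22) m)) :
    ∑ i ∈ Finset.range m, (Nat.card {xy : Fˣ × Fˣ //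
      ((ρ ^ (i : ℤ) : Fˣ) : F) * (xy.1 : F) ^ a11 * (xy.2 : F) ^ a12
        + ((ρ ^ ((i : ℤ) - r) : Fˣ) : F) * (xy.1 : F) ^ a21 * (xy.2 : F) ^ a22
        = (xy.1 : F) ^ a31 * (xy.2 : F) ^ a32} : ℤ)
      = m * m - m * (if (f : ℤ) ∣ w - r then (f : ℤ) else 0) := by
  have hm0 : 0 < m := hm ▸ Fintype.card_pos
  have hord : orderOf ρ = m := hm ▸ orderOf_generator ρ hρ
  have h1 : ∀ i : ℕ, (Nat.card {xy : Fˣ × Fˣ //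
      ((ρ ^ (i : ℤ) : Fˣ) : F) * (xy.1 : F) ^ a11 * (xy.2 : F) ^ a12
        + ((ρ ^ ((i : ℤ) - r) : Fˣ) : F) * (xy.1 : F) ^ a21 * (xy.2 : F) ^ a22
        = (xy.1 : F) ^ a31 * (xy.2 : F) ^ a32} : ℤ)
      = ∑ xy : Fˣ × Fˣ, if ((ρ ^ i : Fˣ) : F) * ((xy.1 : F) ^ a11 * (xy.2 : F) ^ a12
          + ((ρ ^ (-r) : Fˣ) : F) * ((xy.1 : F) ^ a21 * (xy.2 : F) ^ a22))
          = (xy.1 : F) ^ a31 * (xy.2 : F) ^ a32 then (1 : ℤ) else 0 := by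
    intro i
    rw [Nat.card_eq_fintype_card, Fintype.card_subtype, Finset.card_filter]
    rw [Nat.cast_sum]
    refine Finset.sum_congr rfl fun xy _ => ?_
    rw [Nat.cast_ite, Nat.cast_one, Nat.cast_zero]
    congr 1
    rw [sub_eq_add_neg, zpow_add, zpow_natCast, Units.val_mul]
    apply propext
    ring_nf
  simp_rw [h1]
  rw [Finset.sum_comm]
  have h2 : ∀ xy : Fˣ × Fˣ, ((xy.1 : F) ^ a11 * (xy.2 : F) ^ a12
          + ((ρ ^ (-r) : Fˣ) : F) * ((xy.1 : F) ^ a21 * (xy.2 : F) ^ a22) = 0)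
      ↔ xy.1 ^ ((a11 : ℤ) - a21) * xy.2 ^ ((a12 : ℤ) - a22) = ρ ^ (w - r) := by
    rintro ⟨x, y⟩
    simp only
    rw [sub_eq_add_neg w r, zpow_add ρ, hw, zpow_sub, zpow_sub, ← div_eq_mul_inv, ← div_eq_mul_inv,
      div_mul_div_comm, div_eq_iff_eq_mul, add_eq_zero_iff_eq_neg, Units.ext_iff]
    simp
  simp_rw [fun xy : Fˣ × Fˣ => sum_generator_mul_eq ρ hρ hm0 hord
    ((xy.1 : F) ^ a11 * (xy.2 : F) ^ a12
          + ((ρ ^ (-r) : Fˣ) : F) * ((xy.1 : F) ^ a21 * (xy.2 : F) ^ a22))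
    ((xy.1 : F) ^ a31 * (xy.2 : F) ^ a32)
    (mul_ne_zero (pow_ne_zero _ xy.1.ne_zero) (pow_ne_zero _ xy.2.ne_zero)), h2]
  rw [Finset.sum_sub_distrib, Finset.sum_boole,
    card_fiber_powHom ρ hρ _ _ _ f (by rw [hf, hm]), ← hm]
  simp [← hm]

/-- For each r, the sum of N_{ij} over pairs 0 ≤ i, j ≤ q-2 with i - j ≡ r (mod q-1) is zero. -/
theorem trinomial_diag_sum {p n q : ℕ} (hp : p.Prime) (hn : 0 < n) (hq : q = p ^ n)
    {F : Type*} [Field F] [Fintype F] (hF : Fintype.card F = q)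
    (ρ : Fˣ) (hρ : ∀ x : Fˣ, x ∈ Subgroup.zpowers ρ)
    (a11 a12 a21 a22 a31 a32 : ℕ)
    (b11 b12 b21 b22 : ℤ)
    (hb11 : b11 = (a11 : ℤ) - (a31 : ℤ)) (hb12 : b12 = (a12 : ℤ) - (a32 : ℤ))
    (hb21 : b21 = (a21 : ℤ) - (a31 : ℤ)) (hb22 : b22 = (a22 : ℤ) - (a32 : ℤ))
    (hdet : b11 * b22 - b12 * b21 ≠ 0)
    (d e f k w : ℤ)
    (hd : d = Int.gcd b11 (Int.gcd b12 ((q : ℤ) - 1)))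
    (he : e = Int.gcd b21 (Int.gcd b22 ((q : ℤ) - 1)))
    (hf : f = Int.gcd (b11 - b21) (Int.gcd (b12 - b22) ((q : ℤ) - 1)))
    (hk : k = Int.gcd (((q : ℤ) - 1) * (Int.gcd d (Int.gcd e f) : ℕ))
      (b11 * b22 - b12 * b21))
    (hw : w = if Even q then 0 else ((q : ℤ) - 1) / 2)
    (D : ℤ → ℤ → ℤ) (hD : ∀ ℓ i : ℤ, D ℓ i = if ℓ ∣ i then ℓ else 0)
    (C : ℤ → ℤ → ℕ)
    (hC : ∀ i j : ℤ, C i j = Nat.card {xy : Fˣ × Fˣ //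
      ((ρ ^ i : Fˣ) : F) * (xy.1 : F) ^ a11 * (xy.2 : F) ^ a12
        + ((ρ ^ j : Fˣ) : F) * (xy.1 : F) ^ a21 * (xy.2 : F) ^ a22
        = (xy.1 : F) ^ a31 * (xy.2 : F) ^ a32})
    (N : ℤ → ℤ → ℤ)
    (hN : ∀ i j : ℤ, N i j = (C i j : ℤ) - ((q : ℤ) + 1) + D d i + D e j + D f (i - j + w)) :
    ∀ r : ℤ, ∑ i ∈ Finset.range (q - 1), ∑ j ∈ Finset.range (q - 1),
      (if ((q : ℤ) - 1) ∣ ((i : ℤ) - (j : ℤ) - r) then N (i : ℤ) (j : ℤ) else 0) = 0 := by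
  classical
  intro r
  subst hF
  have hcard : 1 < Fintype.card F := Fintype.one_lt_card
  obtain ⟨m, hm⟩ : ∃ m, m = Fintype.card F - 1 := ⟨_, rfl⟩
  have hm0 : 0 < m := by omega
  have hmq : (Fintype.card F : ℤ) - 1 = m := by omega
  have hmu : m = Fintype.card Fˣ := by rw [hm, Fintype.card_units]
  have hord : orderOf ρ = m := hmu ▸ orderOf_generator ρ hρ
  have hρw := generator_zpow_w ρ (hm ▸ hord) w hw
  rw [← hm]
  rw [hmq] at hd he hf ⊢
  -- `d`, `e` and `f` are positive divisors of `m`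
  have hgcd : ∀ (b b' g : ℤ), g = Int.gcd b (Int.gcd b' m) →
      ∃ g' c : ℕ, g = g' ∧ 0 < g' ∧ m = g' * c := by
    intro b b' g hg
    have h1 : g ∣ m := by
      have h2 : g ∣ (Int.gcd b' m : ℤ) := hg ▸ Int.gcd_dvd_right ..
      exact h2.trans (Int.gcd_dvd_right ..)
    rw [hg] at h1
    obtain ⟨c, hc⟩ := Int.natCast_dvd_natCast.1 h1
    exact ⟨_, c, hg, Nat.pos_of_dvd_of_pos ⟨c, hc⟩ hm0, hc⟩
  obtain ⟨d', cd, hd', hd0, hdm⟩ := hgcd _ _ _ hd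
  obtain ⟨e', ce, he', he0, hem⟩ := hgcd _ _ _ he
  obtain ⟨f', cf, hf', hf0, hfm⟩ := hgcd _ _ _ hf
  have hem' : e ∣ m := ⟨ce, by rw [he', hem]; push_cast; ring⟩
  have hfm' : f ∣ m := ⟨cf, by rw [hf', hfm]; push_cast; ring⟩
  -- `N i j` depends only on `j` modulo `m`
  have hper : ∀ i j j' : ℤ, (m : ℤ) ∣ j - j' → N i j = N i j' := by
    intro i j j' hj
    have hρj : ρ ^ j = ρ ^ j' := by
      rw [zpow_eq_zpow_iff_modEq, hord]
      exact (Int.modEq_iff_dvd.2 hj).symm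
    have h1 : (e ∣ j) ↔ e ∣ j' := (dvd_iff_dvd_of_dvd_sub (hem'.trans hj))
    have h2 : (f ∣ i - j + w) ↔ f ∣ i - j' + w := by
      apply dvd_iff_dvd_of_dvd_sub
      rw [show i - j + w - (i - j' + w) = -(j - j') by ring, dvd_neg]
      exact hfm'.trans hj
    simp only [hN, hC, hD, hρj, h1, h2]
  have hinner : ∀ i : ℕ, ∑ j ∈ Finset.range m,
      (if (m : ℤ) ∣ ((i : ℤ) - (j : ℤ) - r) then N i j else 0) = N i (i - r) := by
    intro i
    simp_rw [sub_right_comm (i : ℤ) _ r]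
    rw [sum_range_ite_dvd hm0 ((i : ℤ) - r) (fun j => N i j)]
    apply hper
    rw [Int.toNat_of_nonneg (Int.emod_nonneg _ (by omega)), ← dvd_neg, neg_sub]
    exact Int.dvd_self_sub_emod
  simp_rw [hinner, hN]
  rw [Finset.sum_add_distrib, Finset.sum_add_distrib, Finset.sum_add_distrib,
    Finset.sum_sub_distrib]
  have hsumC : ∑ i ∈ Finset.range m, (C i (i - r) : ℤ)
      = m * m - m * (if (f' : ℤ) ∣ w - r then (f' : ℤ) else 0) := by
    simp_rw [hC]
    apply sum_card_curves ρ hρ hmu a11 a12 a21 a22 a31 a32 r w hρw f'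
    have : (f' : ℤ) = _ := hf'.symm.trans hf
    rw [hb11, hb21, hb12, hb22, sub_sub_sub_cancel_right, sub_sub_sub_cancel_right] at this
    exact_mod_cast this
  have hsumd : ∑ i ∈ Finset.range m, D d i = m := by
    have := sum_dvd_sub hd0 cd 0
    rw [← hdm] at this
    simp only [sub_zero] at this
    simp_rw [hD, hd', this, hdm]
    push_cast; rfl
  have hsume : ∑ i ∈ Finset.range m, D e (i - r) = m := by
    have := sum_dvd_sub he0 ce r
    rw [← hem] at this
    simp_rw [hD, he', this, hem]
    push_cast; rfl
  have hsumf : ∑ i ∈ Finset.range m, D f (i - (i - r) + w)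
      = m * (if (f' : ℤ) ∣ w - r then (f' : ℤ) else 0) := by
    -- `2 * w` is a multiple of `m`, so `f` divides `r + w` exactly when it divides `w - r`
    have h2w : (m : ℤ) ∣ 2 * w := by
      rw [← hord, orderOf_dvd_iff_zpow_eq_one, two_mul, zpow_add, hρw]
      simp
    have hiff : (f ∣ r + w) ↔ f ∣ w - r := by
      rw [← dvd_neg (b := w - r)]
      apply dvd_iff_dvd_of_dvd_sub
      rw [show r + w - -(w - r) = 2 * w by ring]
      exact hfm'.trans h2w
    simp_rw [hD, sub_sub_cancel, hiff, hf']
    simp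
  rw [hsumC, hsumd, hsume, hsumf, Finset.sum_const, Finset.card_range, nsmul_eq_mul]
  linear_combination (-(m : ℤ)) * hmq
end

section
/- With the trinomial-curve notation, for all integers i and j one has N_{i+b11, j+b21} = N_{ij} = N_{i+b12, j+b22}. -/
/-!
The torus automorphism `(x, y) ↦ (s x, t y)` maps the curve with coefficients `(A', B')`
bijectively onto the curve with coefficients `(A, B)` as soon as `A' s^a31 t^a32 = A s^a11 t^a12`
and `B' s^a31 t^a32 = B s^a21 t^a22` (`card_trinomial_congr`). With `(s, t) = (ρ, 1)` this gives the
invariance of the point count under `(i, j) ↦ (i + b11, j + b21)`, and with `(s, t) = (1, ρ)` the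
invariance under `(i, j) ↦ (i + b12, j + b22)`. The three correction terms are also invariant, since
`d` divides `b11, b12`, `e` divides `b21, b22`, and `f` divides `b11 - b21, b12 - b22`.
-/

/-- Rescaling the coordinates by `(s, t)` identifies the torus points of two trinomial curves. -/
lemma card_trinomial_congr {F : Type*} [Field F] (a11 a12 a21 a22 a31 a32 : ℕ)
    (A B A' B' s t : Fˣ)
    (hA : A' * (s ^ a31 * t ^ a32) = A * (s ^ a11 * t ^ a12))
    (hB : B' * (s ^ a31 * t ^ a32) = B * (s ^ a21 * t ^ a22)) :
    Nat.card {xy : Fˣ × Fˣ // (A' : F) * (xy.1 : F) ^ a11 * (xy.2 : F) ^ a12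
        + (B' : F) * (xy.1 : F) ^ a21 * (xy.2 : F) ^ a22
        = (xy.1 : F) ^ a31 * (xy.2 : F) ^ a32}
      = Nat.card {xy : Fˣ × Fˣ // (A : F) * (xy.1 : F) ^ a11 * (xy.2 : F) ^ a12
        + (B : F) * (xy.1 : F) ^ a21 * (xy.2 : F) ^ a22
        = (xy.1 : F) ^ a31 * (xy.2 : F) ^ a32} := by
  refine Nat.card_congr (Equiv.subtypeEquiv (Equiv.mulLeft ((s, t) : Fˣ × Fˣ)) ?_)
  rintro ⟨x, y⟩
  have hA' := congrArg (Units.val) hA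
  have hB' := congrArg (Units.val) hB
  simp only [Units.val_mul, Units.val_pow_eq_pow_val] at hA' hB'
  have hne : (s : F) ^ a31 * (t : F) ^ a32 ≠ 0 :=
    mul_ne_zero (pow_ne_zero _ s.ne_zero) (pow_ne_zero _ t.ne_zero)
  simp only [Equiv.coe_mulLeft, Prod.mk_mul_mk, Units.val_mul, mul_pow]
  rw [← mul_right_inj' hne]
  constructor <;> intro h
  · linear_combination h - (x : F) ^ a11 * (y : F) ^ a12 * hA'
      - (x : F) ^ a21 * (y : F) ^ a22 * hB'
  · linear_combination h + (x : F) ^ a11 * (y : F) ^ a12 * hA'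
      + (x : F) ^ a21 * (y : F) ^ a22 * hB'

/-- N_{i+b11, j+b21} = N_{ij} = N_{i+b12, j+b22} for all i, j. -/
theorem trinomial_periodicity {p n q : ℕ} (hp : p.Prime) (hn : 0 < n) (hq : q = p ^ n)
    {F : Type*} [Field F] [Fintype F] (hF : Fintype.card F = q)
    (ρ : Fˣ) (hρ : ∀ x : Fˣ, x ∈ Subgroup.zpowers ρ)
    (a11 a12 a21 a22 a31 a32 : ℕ)
    (b11 b12 b21 b22 : ℤ)
    (hb11 : b11 = (a11 : ℤ) - (a31 : ℤ)) (hb12 : b12 = (a12 : ℤ) - (a32 : ℤ))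
    (hb21 : b21 = (a21 : ℤ) - (a31 : ℤ)) (hb22 : b22 = (a22 : ℤ) - (a32 : ℤ))
    (hdet : b11 * b22 - b12 * b21 ≠ 0)
    (d e f k w : ℤ)
    (hd : d = Int.gcd b11 (Int.gcd b12 ((q : ℤ) - 1)))
    (he : e = Int.gcd b21 (Int.gcd b22 ((q : ℤ) - 1)))
    (hf : f = Int.gcd (b11 - b21) (Int.gcd (b12 - b22) ((q : ℤ) - 1)))
    (hk : k = Int.gcd (((q : ℤ) - 1) * (Int.gcd d (Int.gcd e f) : ℕ))
      (b11 * b22 - b12 * b21))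
    (hw : w = if Even q then 0 else ((q : ℤ) - 1) / 2)
    (D : ℤ → ℤ → ℤ) (hD : ∀ ℓ i : ℤ, D ℓ i = if ℓ ∣ i then ℓ else 0)
    (C : ℤ → ℤ → ℕ)
    (hC : ∀ i j : ℤ, C i j = Nat.card {xy : Fˣ × Fˣ //
      ((ρ ^ i : Fˣ) : F) * (xy.1 : F) ^ a11 * (xy.2 : F) ^ a12
        + ((ρ ^ j : Fˣ) : F) * (xy.1 : F) ^ a21 * (xy.2 : F) ^ a22
        = (xy.1 : F) ^ a31 * (xy.2 : F) ^ a32})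
    (N : ℤ → ℤ → ℤ)
    (hN : ∀ i j : ℤ, N i j = (C i j : ℤ) - ((q : ℤ) + 1) + D d i + D e j + D f (i - j + w)) :
    ∀ i j : ℤ, N (i + b11) (j + b21) = N i j ∧ N i j = N (i + b12) (j + b22) := by
  have hDper : ∀ ℓ i b : ℤ, ℓ ∣ b → D ℓ (i + b) = D ℓ i := by
    intro ℓ i b h
    simp only [hD, dvd_add_left h]
  have gcd_dvd : ∀ a b c : ℤ, ((Int.gcd a (Int.gcd b c) : ℕ) : ℤ) ∣ a ∧
      ((Int.gcd a (Int.gcd b c) : ℕ) : ℤ) ∣ b := fun a b c =>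
    ⟨Int.gcd_dvd_left .., (Int.gcd_dvd_right ..).trans (Int.gcd_dvd_left ..)⟩
  have hd_dvd := gcd_dvd b11 b12 ((q : ℤ) - 1)
  have he_dvd := gcd_dvd b21 b22 ((q : ℤ) - 1)
  have hf_dvd := gcd_dvd (b11 - b21) (b12 - b22) ((q : ℤ) - 1)
  rw [← hd] at hd_dvd
  rw [← he] at he_dvd
  rw [← hf] at hf_dvd
  -- Exponent form of the coefficient hypotheses of `card_trinomial_congr`.
  have hpow : ∀ (i b : ℤ) (a c : ℕ), b = (a : ℤ) - c →
      ρ ^ (i + b) * ρ ^ c = ρ ^ i * ρ ^ a := by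
    intro i b a c h
    rw [← zpow_natCast, ← zpow_natCast, ← zpow_add, ← zpow_add, h]
    congr 1
    ring
  intro i j
  constructor
  · have hc : C (i + b11) (j + b21) = C i j := by
      rw [hC, hC]
      apply card_trinomial_congr (s := ρ) (t := 1)
      · simpa using hpow i b11 a11 a31 hb11
      · simpa using hpow j b21 a21 a31 hb21
    rw [hN, hN, hc, hDper d i b11 hd_dvd.1, hDper e j b21 he_dvd.1,
      show i + b11 - (j + b21) + w = i - j + w + (b11 - b21) by ring, hDper f _ _ hf_dvd.1]
  · have hc : C (i + b12) (j + b22) = C i j := by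
      rw [hC, hC]
      apply card_trinomial_congr (s := 1) (t := ρ)
      · simpa using hpow i b12 a12 a32 hb12
      · simpa using hpow j b22 a22 a32 hb22
    rw [hN, hN, hc, hDper d i b12 hd_dvd.2, hDper e j b22 he_dvd.2,
      show i + b12 - (j + b22) + w = i - j + w + (b12 - b22) by ring, hDper f _ _ hf_dvd.2]
end

section
/- With the trinomial-curve notation, the double sum over i = 0, ..., q−2 and j = 0, ..., q−2 of N_{ij}^2 equals (q−1)^2 · q · (k − d − e − f + 2). -/
/-!
Write `G = Fˣ`, `m = q - 1 = |G|`, and let `φ : G² → G²` be the homomorphism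
`(x, y) ↦ (x^b11 y^b12, x^b21 y^b22)`.  Dividing the equation of the curve by `x^a31 y^a32` shows that
`C i j` counts the `z ∈ G²` with `α φ(z)` on the line `L : s + t = 1`, where `α = (ρ^i, ρ^j)`.  The
correction terms have the same shape: since the fibres of a homomorphism
`(x, y) ↦ x^b y^c` from `G²` to `G` have `m * gcd(b, c, m)` elements or none, `m * D d i`, `m * D e j`
and `m * D f (i - j + w)` count the `z` with `α φ(z)` on `X : s = 1`, on `Y : t = 1`, and on
`Z : s = -t` respectively (`ρ^w = -1`).  These correspond to the three points of the projective line
`L` off the torus.  So, with the weight `wt = m·1_L + 1_X + 1_Y + 1_Z` on `G²`,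

  `m * N i j = ∑ z, wt (α φ(z)) - m (q + 1)`.

Squaring and summing over `α ∈ G²` gives, up to an explicit constant, `m²` times the autocorrelation
`∑ w, ∑ s, wt s * wt (s φ(w))` (`sum_sq_eq_autocorr`).  The inner sum, for fixed `h = φ(w)`, consists
of sixteen incidence counts of lines with translated lines, each elementary; it depends only on which
of `h₁ = 1`, `h₂ = 1`, `h₁ = h₂` hold (`corr_wt`).  Summing over `w`, these three conditions occur
`m d`, `m e`, `m f` times, and all of them together `|ker φ|` times.

It remains to see `|ker φ| = k` (`card_ker_pair`).  A unimodular change of coordinates makes the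
exponent matrix lower triangular, say with rows `(d₀, 0)` and `(r, t)`; the `d₀`-torsion of `G` is the
group of `(m / d)`-th powers, `d = gcd(d₀, m)`, which reduces the count to the kernel of the single
homomorphism with exponents `(r m / d, t)`, and the resulting expression `d * gcd(r m / d, t, m)` is
compared with `k` by looking at their common divisors.
-/

namespace TrinomialCurve

open Finset

/-! ### Linear equations in a finite cyclic group -/

section Cyclic
variable {A : Type*} [AddCommGroup A]

/-- The homomorphism `(x, y) ↦ b x + c y` on an additive abelian group. -/
def linHom (b c : ℤ) : A × A →+ A :=
  AddMonoidHom.mk' (fun z => b • z.1 + c • z.2) (by intro x y; simp only [Prod.fst_add, Prod.snd_add]; module)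

lemma linHom_apply (b c : ℤ) (z : A × A) : linHom b c z = b • z.1 + c • z.2 := rfl

lemma card_ker_mul_card_range {B : Type*} [AddCommGroup B] (h : A →+ B) :
    Nat.card h.ker * Nat.card h.range = Nat.card A := by
  rw [← AddSubgroup.index_ker, AddSubgroup.card_mul_index]

lemma zsmul_gen_eq_zero_iff [Finite A] {ρ : A} (hρ : ∀ x : A, x ∈ AddSubgroup.zmultiples ρ) (i : ℤ) :
    i • ρ = 0 ↔ (Nat.card A : ℤ) ∣ i := by
  rw [← addOrderOf_eq_card_of_forall_mem_zmultiples hρ, addOrderOf_dvd_iff_zsmul_eq_zero]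

lemma card_zmultiples_mul [Finite A] {ρ : A} (hρ : ∀ x : A, x ∈ AddSubgroup.zmultiples ρ) {g : ℕ}
    (hg : g ∣ Nat.card A) : Nat.card (AddSubgroup.zmultiples ((g : ℤ) • ρ)) * g = Nat.card A := by
  rw [Nat.card_zmultiples, natCast_zsmul, addOrderOf_nsmul,
    addOrderOf_eq_card_of_forall_mem_zmultiples hρ, Nat.gcd_eq_right hg, Nat.div_mul_cancel hg]

lemma range_linHom [Finite A] {ρ : A} (hρ : ∀ x : A, x ∈ AddSubgroup.zmultiples ρ) (b c : ℤ) :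
    (linHom b c : A × A →+ A).range =
      AddSubgroup.zmultiples ((Int.gcd b (Int.gcd c (Nat.card A)) : ℤ) • ρ) := by
  set g : ℕ := Int.gcd b (Int.gcd c (Nat.card A)) with hg
  have hgb : (g : ℤ) ∣ b := Int.gcd_dvd_left ..
  have hgc : (g : ℤ) ∣ c := (Int.gcd_dvd_right ..).trans (Int.gcd_dvd_left ..)
  apply le_antisymm
  · rintro _ ⟨⟨x, y⟩, rfl⟩
    obtain ⟨i, rfl⟩ := AddSubgroup.mem_zmultiples_iff.1 (hρ x)
    obtain ⟨j, rfl⟩ := AddSubgroup.mem_zmultiples_iff.1 (hρ y)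
    obtain ⟨b', hb'⟩ := hgb
    obtain ⟨c', hc'⟩ := hgc
    rw [AddSubgroup.mem_zmultiples_iff]
    refine ⟨b' * i + c' * j, ?_⟩
    rw [linHom_apply, hb', hc']
    module
  · rw [AddSubgroup.zmultiples_le]
    have h1 := Int.gcd_eq_gcd_ab b (Int.gcd c (Nat.card A))
    have h2 := Int.gcd_eq_gcd_ab c (Nat.card A)
    have h3 : (Nat.card A : ℤ) • ρ = 0 := (zsmul_gen_eq_zero_iff hρ _).2 dvd_rfl
    refine ⟨((b.gcdA (Int.gcd c (Nat.card A))) • ρ,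
      (c.gcdA (Nat.card A) * b.gcdB (Int.gcd c (Nat.card A))) • ρ), ?_⟩
    rw [linHom_apply, hg, h1]
    generalize b.gcdA (Int.gcd c (Nat.card A)) = β
    generalize b.gcdB (Int.gcd c (Nat.card A)) = γ
    rw [h2, ← sub_eq_zero]
    trans (-(c.gcdB (Nat.card A)) * γ) • ((Nat.card A : ℤ) • ρ)
    · module
    · rw [h3, smul_zero]

lemma gcd3_pos [Finite A] (b c : ℤ) : 0 < Int.gcd b (Int.gcd c (Nat.card A)) := by
  have : 0 < Nat.card A := Nat.card_pos
  simp only [Int.gcd_pos_iff]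
  right
  simp only [ne_eq, Int.natCast_eq_zero, Int.gcd_eq_zero_iff]
  omega

lemma gcd3_dvd (b c : ℤ) (m : ℕ) : Int.gcd b (Int.gcd c m) ∣ m := by
  have : ((Int.gcd b (Int.gcd c m) : ℕ) : ℤ) ∣ m :=
    (Int.gcd_dvd_right ..).trans (Int.gcd_dvd_right ..)
  exact_mod_cast this

lemma card_ker_linHom [Finite A] {ρ : A} (hρ : ∀ x : A, x ∈ AddSubgroup.zmultiples ρ) (b c : ℤ) :
    Nat.card (linHom b c : A × A →+ A).ker = Nat.card A * Int.gcd b (Int.gcd c (Nat.card A)) := by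
  have h := card_ker_mul_card_range (linHom b c : A × A →+ A)
  rw [range_linHom hρ, Nat.card_prod] at h
  have h2 := card_zmultiples_mul hρ (gcd3_dvd b c (Nat.card A))
  set R := Nat.card (AddSubgroup.zmultiples ((Int.gcd b (Int.gcd c (Nat.card A)) : ℤ) • ρ))
  have hR : 0 < R := Nat.card_pos
  apply Nat.eq_of_mul_eq_mul_right hR
  rw [h, mul_assoc, mul_comm _ R, h2]

/-- The number of solutions of `b x + c y = i ρ` in a finite cyclic group with generator `ρ`: a
nonempty fibre is a translate of the kernel, and the image is generated by `gcd(b, c, |A|) ρ`. -/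
lemma card_fiber_linHom [Finite A] {ρ : A} (hρ : ∀ x : A, x ∈ AddSubgroup.zmultiples ρ) (b c i : ℤ) :
    Nat.card {z : A × A // b • z.1 + c • z.2 = i • ρ} =
      if (Int.gcd b (Int.gcd c (Nat.card A)) : ℤ) ∣ i then
        Nat.card A * Int.gcd b (Int.gcd c (Nat.card A)) else 0 := by
  split_ifs with h
  · have : i • ρ ∈ (linHom b c : A × A →+ A).range := by
      rw [range_linHom hρ, AddSubgroup.mem_zmultiples_iff]
      obtain ⟨j, rfl⟩ := h
      exact ⟨j, by module⟩
    obtain ⟨z₀, hz₀⟩ := this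
    rw [← card_ker_linHom hρ]
    refine Nat.card_congr ((Equiv.subRight z₀).subtypeEquiv fun z => ?_)
    rw [AddMonoidHom.mem_ker, Equiv.subRight_apply, map_sub, hz₀, sub_eq_zero, linHom_apply]
  · rw [Nat.card_eq_zero]
    left
    refine ⟨fun ⟨z, hz⟩ => h ?_⟩
    have : i • ρ ∈ (linHom b c : A × A →+ A).range := ⟨z, hz⟩
    rw [range_linHom hρ, AddSubgroup.mem_zmultiples_iff] at this
    obtain ⟨j, hj⟩ := this
    have h4 : (j * (Int.gcd b (Int.gcd c (Nat.card A)) : ℤ) - i) • ρ = 0 := by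
      rw [sub_smul, ← hj]; module
    rw [zsmul_gen_eq_zero_iff hρ] at h4
    have h5 := (Int.natCast_dvd_natCast.2 (gcd3_dvd b c (Nat.card A))).trans h4
    exact (dvd_sub_right (Dvd.intro_left j rfl)).1 h5

lemma dvd_mul_gcd (x m a b : ℤ) : x ∣ m * (Int.gcd a b : ℤ) ↔ x ∣ m * a ∧ x ∣ m * b := by
  constructor
  · intro h
    exact ⟨h.trans (mul_dvd_mul_left _ (Int.gcd_dvd_left ..)),
      h.trans (mul_dvd_mul_left _ (Int.gcd_dvd_right ..))⟩
  · rintro ⟨h1, h2⟩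
    rw [Int.gcd_eq_gcd_ab, mul_add, ← mul_assoc, ← mul_assoc]
    exact dvd_add (h1.mul_right _) (h2.mul_right _)

/-- The order of the kernel of a triangular matrix. With `m' = |A| / d`, the map `(u, y) ↦ (m' u, y)`
sends the kernel of `(u, y) ↦ r m' u + t y` onto the group to be counted, with a kernel of order `m'`. -/
lemma card_ker_triangular [Finite A] {ρ : A} (hρ : ∀ x : A, x ∈ AddSubgroup.zmultiples ρ)
    (d₀ r t : ℤ) (d m' : ℕ) (hd : d = Int.gcd d₀ (Nat.card A)) (hm' : Nat.card A = d * m') :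
    Nat.card {z : A × A // d₀ • z.1 = 0 ∧ r • z.1 + t • z.2 = 0} =
      d * Int.gcd (r * m') (Int.gcd t (Nat.card A)) := by
  have hm : 0 < Nat.card A := Nat.card_pos
  have hd0 : 0 < d := Nat.pos_of_ne_zero (by rintro rfl; simp at hm'; omega)
  have hm'0 : 0 < m' := Nat.pos_of_ne_zero (by rintro rfl; simp at hm'; omega)
  let K' : AddSubgroup (A × A) := (linHom (r * m') t).ker
  let f : K' →+ A × A := AddMonoidHom.mk' (fun z => ((m' : ℤ) • z.1.1, z.1.2))
    (by intro x y; simp)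
  have hf : ∀ z, f z = ((m' : ℤ) • z.1.1, z.1.2) := fun _ => rfl
  have hcard := card_ker_mul_card_range f
  rw [show Nat.card K' = _ from card_ker_linHom hρ _ _] at hcard
  let s : A →+ A := zsmulAddGroupHom (m' : ℤ)
  have hs : s.range = AddSubgroup.zmultiples ((m' : ℤ) • ρ) := by
    ext x
    rw [AddSubgroup.mem_zmultiples_iff]
    constructor
    · rintro ⟨y, rfl⟩
      obtain ⟨i, rfl⟩ := AddSubgroup.mem_zmultiples_iff.1 (hρ y)
      refine ⟨i, ?_⟩
      simp only [s, zsmulAddGroupHom_apply]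
      exact smul_comm _ _ _
    · rintro ⟨i, rfl⟩
      refine ⟨i • ρ, ?_⟩
      simp only [s, zsmulAddGroupHom_apply]
      exact smul_comm _ _ _
  have hsker : Nat.card s.ker = m' := by
    have h1 := card_ker_mul_card_range s
    have h2 := card_zmultiples_mul hρ (g := m') ⟨d, by rw [hm', mul_comm]⟩
    rw [← hs] at h2
    have : 0 < Nat.card s.range := Nat.card_pos
    apply Nat.eq_of_mul_eq_mul_right this
    rw [h1, ← h2, mul_comm]
  have hker : Nat.card f.ker = m' := by
    rw [← hsker]
    refine Nat.card_congr
      { toFun := fun z => ⟨z.1.1.1, congrArg Prod.fst (show f z.1 = 0 from z.2)⟩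
        invFun := fun u => ⟨⟨(u.1, 0), ?_⟩, ?_⟩
        left_inv := ?_
        right_inv := fun _ => rfl }
    · have hu : (m' : ℤ) • u.1 = 0 := u.2
      rw [AddMonoidHom.mem_ker, linHom_apply]
      simp only [mul_smul, hu, smul_zero, add_zero]
    · have hu : (m' : ℤ) • u.1 = 0 := u.2
      rw [AddMonoidHom.mem_ker, hf]
      exact Prod.ext hu rfl
    · rintro ⟨⟨⟨x, y⟩, hxy⟩, hz⟩
      have : y = 0 := congrArg Prod.snd hz
      subst this
      rfl
  have hrange : Nat.card f.range = Nat.card {z : A × A // d₀ • z.1 = 0 ∧ r • z.1 + t • z.2 = 0} := by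
    refine Nat.card_congr (Equiv.subtypeEquivRight ?_)
    rintro ⟨x, y⟩
    constructor
    · rintro ⟨⟨⟨u, v⟩, huv⟩, hz⟩
      rw [hf] at hz
      obtain ⟨h1, h2⟩ := Prod.mk.inj hz
      simp only at h1 h2
      subst h1 h2
      have huv' : (r * m' : ℤ) • u + t • v = 0 := huv
      refine ⟨?_, ?_⟩
      · obtain ⟨i, rfl⟩ := AddSubgroup.mem_zmultiples_iff.1 (hρ u)
        have : (d : ℤ) ∣ d₀ := hd ▸ Int.gcd_dvd_left ..
        obtain ⟨d', rfl⟩ := this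
        have h3 : (Nat.card A : ℤ) • ρ = 0 := (zsmul_gen_eq_zero_iff hρ _).2 dvd_rfl
        trans (d' * i) • ((Nat.card A : ℤ) • ρ)
        · rw [hm']; push_cast; module
        · rw [h3, smul_zero]
      · rw [← huv']; module
    · rintro ⟨h1, h2⟩
      simp only at h1 h2
      obtain ⟨i, rfl⟩ := AddSubgroup.mem_zmultiples_iff.1 (hρ x)
      rw [← mul_smul, zsmul_gen_eq_zero_iff hρ] at h1
      have h3 : (Nat.card A : ℤ) ∣ i * (Int.gcd d₀ (Nat.card A) : ℤ) :=
        (dvd_mul_gcd _ _ _ _).2 ⟨mul_comm d₀ i ▸ h1, Dvd.intro_left i rfl⟩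
      rw [← hd, hm', mul_comm i] at h3
      push_cast at h3
      obtain ⟨j, rfl⟩ := Int.dvd_of_mul_dvd_mul_left (by exact_mod_cast hd0.ne') h3
      refine ⟨⟨(j • ρ, y), ?_⟩, ?_⟩
      · rw [AddMonoidHom.mem_ker, linHom_apply, ← h2]; module
      · rw [hf]; simp only; rw [mul_smul]
  rw [← hrange]
  rw [hker, hm'] at hcard
  rw [hm']
  apply Nat.eq_of_mul_eq_mul_left hm'0
  rw [hcard]; ring

/-- The order found for the triangular matrix equals the expression `k` in the original coefficients;
both sides have the same divisors. -/
lemma gcd_arith (b11 b12 b21 b22 c1 c2 u v d₀ r t : ℤ) (m d m' : ℕ)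
    (h1 : b11 = d₀ * c1) (h2 : b12 = d₀ * c2) (huv : u * c1 + v * c2 = 1)
    (hr : r = b21 * u + b22 * v) (ht : t = b22 * c1 - b21 * c2)
    (hd : d = Int.gcd d₀ m) (hm : m = d * m') :
    d * Int.gcd (r * m') (Int.gcd t m) = Int.gcd ((m : ℤ) *
      (Int.gcd (Int.gcd b11 (Int.gcd b12 m)) (Int.gcd (Int.gcd b21 (Int.gcd b22 m))
        (Int.gcd (b11 - b21) (Int.gcd (b12 - b22) m))) : ℕ)) (b11 * b22 - b12 * b21) := by
  have hb21 : b21 = r * c1 - v * t := by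
    rw [hr, ht]; linear_combination (-b21) * huv
  have hb22 : b22 = r * c2 + u * t := by
    rw [hr, ht]; linear_combination (-b22) * huv
  have hdet : b11 * b22 - b12 * b21 = t * d₀ := by rw [h1, h2, ht]; ring
  have key : ∀ x : ℤ, x ∣ ((d * Int.gcd (r * m') (Int.gcd t m) : ℕ) : ℤ) ↔
      x ∣ ((Int.gcd ((m : ℤ) *
      (Int.gcd (Int.gcd b11 (Int.gcd b12 m)) (Int.gcd (Int.gcd b21 (Int.gcd b22 m))
        (Int.gcd (b11 - b21) (Int.gcd (b12 - b22) m))) : ℕ)) (b11 * b22 - b12 * b21) : ℕ) : ℤ) := by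
    intro x
    rw [Int.dvd_coe_gcd_iff, hdet]
    push_cast
    simp only [dvd_mul_gcd]
    have e1 : (d : ℤ) * (r * m') = m * r := by rw [hm]; push_cast; ring
    rw [e1, mul_comm (d : ℤ) t, mul_comm (d : ℤ) m, hd]
    simp only [dvd_mul_gcd]
    constructor
    · rintro ⟨hr', ⟨ht1, ht2⟩, hm1, hm2⟩
      rw [mul_comm] at ht2
      have hx21 : x ∣ m * b21 := by
        rw [hb21, show (m : ℤ) * (r * c1 - v * t) = m * r * c1 - m * t * v by ring]
        exact dvd_sub (hr'.mul_right _) (ht2.mul_right _)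
      have hx22 : x ∣ m * b22 := by
        rw [hb22, show (m : ℤ) * (r * c2 + u * t) = m * r * c2 + m * t * u by ring]
        exact dvd_add (hr'.mul_right _) (ht2.mul_right _)
      have hx11 : x ∣ m * b11 := by
        rw [h1, ← mul_assoc]; exact hm1.mul_right _
      have hx12 : x ∣ m * b12 := by
        rw [h2, ← mul_assoc]; exact hm1.mul_right _
      refine ⟨⟨⟨hx11, hx12, hm2⟩, ⟨hx21, hx22, hm2⟩, ?_, ?_, hm2⟩, ht1⟩
      · rw [mul_sub]; exact dvd_sub hx11 hx21
      · rw [mul_sub]; exact dvd_sub hx12 hx22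
    · rintro ⟨⟨⟨hx11, hx12, hm2⟩, ⟨hx21, hx22, -⟩, -⟩, ht1⟩
      refine ⟨?_, ⟨ht1, ?_⟩, ?_, hm2⟩
      · rw [hr, show (m : ℤ) * (b21 * u + b22 * v) = m * b21 * u + m * b22 * v by ring]
        exact dvd_add (hx21.mul_right _) (hx22.mul_right _)
      · rw [ht, show (b22 * c1 - b21 * c2) * (m : ℤ) = m * b22 * c1 - m * b21 * c2 by ring]
        exact dvd_sub (hx22.mul_right _) (hx21.mul_right _)
      · have : (m : ℤ) * d₀ = m * b11 * u + m * b12 * v := by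
          rw [h1, h2]; linear_combination (-(m : ℤ) * d₀) * huv
        rw [this]
        exact dvd_add (hx11.mul_right _) (hx12.mul_right _)
  apply Nat.dvd_antisymm
  · exact Int.natCast_dvd_natCast.1 ((key _).1 dvd_rfl)
  · exact Int.natCast_dvd_natCast.1 ((key _).2 dvd_rfl)

/-- The order of the kernel of an integer `2 × 2` matrix with nonzero determinant, acting on the square
of a finite cyclic group. -/
lemma card_ker_pair [Finite A] {ρ : A} (hρ : ∀ x : A, x ∈ AddSubgroup.zmultiples ρ)
    (b11 b12 b21 b22 : ℤ) (hdet : b11 * b22 - b12 * b21 ≠ 0) :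
    Nat.card {z : A × A // b11 • z.1 + b12 • z.2 = 0 ∧ b21 • z.1 + b22 • z.2 = 0} =
      Int.gcd ((Nat.card A : ℤ) *
      (Int.gcd (Int.gcd b11 (Int.gcd b12 (Nat.card A))) (Int.gcd (Int.gcd b21 (Int.gcd b22 (Nat.card A)))
        (Int.gcd (b11 - b21) (Int.gcd (b12 - b22) (Nat.card A)))) : ℕ)) (b11 * b22 - b12 * b21) := by
  obtain ⟨c1, h1⟩ := Int.gcd_dvd_left b11 b12
  obtain ⟨c2, h2⟩ := Int.gcd_dvd_right b11 b12
  have hbez := Int.gcd_eq_gcd_ab b11 b12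
  set u := b11.gcdA b12
  set v := b11.gcdB b12
  have hd0 : (Int.gcd b11 b12 : ℤ) ≠ 0 := by
    intro h
    rw [h] at h1 h2
    apply hdet; rw [h1, h2]; ring
  set d₀ : ℤ := ((Int.gcd b11 b12 : ℕ) : ℤ)
  have huv : u * c1 + v * c2 = 1 := by
    apply mul_left_cancel₀ hd0
    linear_combination (-u) * h1 - v * h2 - hbez
  obtain ⟨m', hm'⟩ : Int.gcd d₀ (Nat.card A) ∣ Nat.card A := by
    exact_mod_cast Int.gcd_dvd_right d₀ (Nat.card A)
  rw [← gcd_arith b11 b12 b21 b22 c1 c2 u v d₀ _ _ (Nat.card A) _ m' h1 h2 huv rfl rfl rfl hm',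
    ← card_ker_triangular hρ d₀ _ _ _ m' rfl hm']
  have inv1 : ∀ z : A × A, (u • (c1 • z.1 + c2 • z.2) - c2 • (u • z.2 - v • z.1)) = z.1 := by
    intro z
    trans (u * c1 + v * c2) • z.1
    · module
    · rw [huv, one_smul]
  have inv2 : ∀ z : A × A, (v • (c1 • z.1 + c2 • z.2) + c1 • (u • z.2 - v • z.1)) = z.2 := by
    intro z
    trans (u * c1 + v * c2) • z.2
    · module
    · rw [huv, one_smul]
  -- `E` is the unimodular substitution with matrix `(c1, c2; -v, u)`.
  let E : A × A ≃ A × A :=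
    { toFun := fun z => (c1 • z.1 + c2 • z.2, u • z.2 - v • z.1)
      invFun := fun z => (u • z.1 - c2 • z.2, v • z.1 + c1 • z.2)
      left_inv := fun z => Prod.ext (inv1 z) (inv2 z)
      right_inv := fun z => by
        refine Prod.ext ?_ ?_
        · trans (u * c1 + v * c2) • z.1
          · simp only; module
          · rw [huv, one_smul]
        · trans (u * c1 + v * c2) • z.2
          · simp only; module
          · rw [huv, one_smul] }
  refine Nat.card_congr (E.subtypeEquiv fun z => ?_)
  have e1 : d₀ • (E z).1 = b11 • z.1 + b12 • z.2 := by
    simp only [E, Equiv.coe_fn_mk]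
    rw [h1, h2]; module
  have e2 : (b21 * u + b22 * v) • (E z).1 + (b22 * c1 - b21 * c2) • (E z).2 =
      b21 • z.1 + b22 • z.2 := by
    conv_rhs => rw [← inv1 z, ← inv2 z]
    simp only [E, Equiv.coe_fn_mk]
    module
  rw [e1, e2]

end Cyclic

/-! ### Sums over finite groups -/

lemma sum_generator {G : Type*} [Group G] [Fintype G] [DecidableEq G] (ρ : G)
    (hρ : ∀ x : G, x ∈ Subgroup.zpowers ρ)
    (H : G → ℤ) : ∑ i ∈ range (Fintype.card G), H (ρ ^ (i : ℤ)) = ∑ x, H x := by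
  have h := IsCyclic.image_range_card hρ
  rw [Nat.card_eq_fintype_card] at h
  rw [← h, Finset.sum_image]
  · simp
  · apply Finset.injOn_of_card_image_eq
    rw [h]; simp

/-- Averaging a square over translates gives an autocorrelation. -/
lemma sum_sq_eq_autocorr {Z P : Type*} [CommGroup Z] [CommGroup P] [Fintype Z] [Fintype P]
    (φ : Z →* P) (g : P → ℤ) :
    ∑ α, (∑ z, g (α * φ z)) ^ 2 = Fintype.card Z * ∑ w, ∑ s, g s * g (s * φ w) := by
  calc ∑ α, (∑ z, g (α * φ z)) ^ 2 = ∑ α, ∑ z, ∑ w, g (α * φ z) * g (α * φ z * φ w) := by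
        refine Finset.sum_congr rfl fun α _ => ?_
        rw [sq, Finset.sum_mul]
        refine Finset.sum_congr rfl fun z _ => ?_
        rw [Finset.mul_sum, ← Equiv.sum_comp (Equiv.mulLeft z)]
        simp [mul_assoc]
    _ = ∑ z, ∑ w, ∑ α, g (α * φ z) * g (α * φ z * φ w) := by
        rw [Finset.sum_comm]
        exact Finset.sum_congr rfl fun z _ => Finset.sum_comm
    _ = ∑ z : Z, ∑ w, ∑ s, g s * g (s * φ w) := by
        refine Finset.sum_congr rfl fun z _ => Finset.sum_congr rfl fun w _ => ?_
        exact Equiv.sum_comp (Equiv.mulRight (φ z)) (fun s => g s * g (s * φ w))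
    _ = _ := by simp

lemma sum_sum_translate {Z P : Type*} [CommGroup Z] [CommGroup P] [Fintype Z] [Fintype P]
    (φ : Z →* P) (g : P → ℤ) :
    ∑ α, ∑ z, g (α * φ z) = Fintype.card Z * ∑ s, g s := by
  rw [Finset.sum_comm]
  have : ∀ z, ∑ α, g (α * φ z) = ∑ s, g s := fun z => Equiv.sum_comp (Equiv.mulRight (φ z)) g
  simp [this]

/-! ### Incidences between translates of four lines in the torus -/

section Field
variable {F : Type*} [Field F]

open Classical in
/-- The Iverson bracket of a proposition. -/
noncomputable def iv (p : Prop) : ℤ := if p then 1 else 0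

lemma iv_congr {p p' : Prop} (h : p ↔ p') : iv p = iv p' := by rw [propext h]

lemma iv_and (p p' : Prop) : iv (p ∧ p') = iv p * iv p' := by
  unfold iv; split_ifs <;> simp_all

lemma iv_not (p : Prop) : iv (¬ p) = 1 - iv p := by
  unfold iv; split_ifs <;> simp_all

lemma iv_true {p : Prop} (h : p) : iv p = 1 := by simp [iv, h]
lemma iv_false {p : Prop} (h : ¬ p) : iv p = 0 := by simp [iv, h]

lemma sum_iv_card {Z : Type*} [Fintype Z] (P : Z → Prop) : ∑ z, iv (P z) = Nat.card {z // P z} := by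
  classical
  rw [Nat.card_eq_fintype_card, Fintype.card_subtype]
  simp [iv]

/-- The line `s + t = 1`. -/
def onL (s : Fˣ × Fˣ) : Prop := (s.1 : F) + s.2 = 1

/-- The line `s = 1`. -/
def onX (s : Fˣ × Fˣ) : Prop := (s.1 : F) = 1

/-- The line `t = 1`. -/
def onY (s : Fˣ × Fˣ) : Prop := (s.2 : F) = 1

/-- The line `s = -t`. -/
def onZ (s : Fˣ × Fˣ) : Prop := (s.1 : F) = -s.2

lemma onL_swap (s : Fˣ × Fˣ) : onL s.swap = onL s := by simp [onL, add_comm]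
lemma onZ_swap (s : Fˣ × Fˣ) : onZ s.swap = onZ s := by
  simp only [onZ, Prod.fst_swap, Prod.snd_swap, eq_iff_iff]
  rw [eq_neg_iff_add_eq_zero, eq_neg_iff_add_eq_zero, add_comm]
lemma onY_swap (s : Fˣ × Fˣ) : onY s.swap = onX s := rfl
lemma onX_swap (s : Fˣ × Fˣ) : onX s.swap = onY s := rfl
lemma swap_mul' (s h : Fˣ × Fˣ) : s.swap * h = (s * h.swap).swap := rfl

variable [Fintype Fˣ]

lemma sum_iv_units (u : F) : ∑ t : Fˣ, iv ((t : F) = u) = iv (u ≠ 0) := by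
  classical
  by_cases hu : u = 0
  · subst hu
    simp [iv]
  · rw [iv_true hu]
    have : ∀ t : Fˣ, ((t : F) = u) ↔ t = Units.mk0 u hu := fun t => by simp [Units.ext_iff]
    simp [iv, this]

/-- If two conditions pin down a single point `(x, y)` of the affine plane, they are met in the torus once
or never, according to whether `x` and `y` are both nonzero. -/
lemma sum_point (P Q : Fˣ × Fˣ → Prop) (x y : F)
    (h : ∀ s, P s ∧ Q s ↔ (s.1 : F) = x ∧ (s.2 : F) = y) :
    ∑ s, iv (P s) * iv (Q s) = iv (x ≠ 0) * iv (y ≠ 0) := by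
  simp_rw [← iv_and, h, iv_and]
  rw [Fintype.sum_prod_type, ← sum_iv_units, ← sum_iv_units, Finset.sum_mul_sum]

lemma sum_none (P Q : Fˣ × Fˣ → Prop) (h : ∀ s, P s → ¬ Q s) :
    ∑ s, iv (P s) * iv (Q s) = 0 := by
  refine Finset.sum_eq_zero fun s _ => ?_
  rw [← iv_and, iv_false]
  exact fun hs => h s hs.1 hs.2

/-- The weight `|Fˣ|·1_L + 1_X + 1_Y + 1_Z` on the torus. -/
noncomputable def wt (s : Fˣ × Fˣ) : ℤ :=
  (Fintype.card Fˣ : ℤ) * iv (onL s) + iv (onX s) + iv (onY s) + iv (onZ s)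

lemma sum_onX : ∑ s : Fˣ × Fˣ, iv (onX s) = Fintype.card Fˣ := by
  unfold onX
  rw [Fintype.sum_prod_type_right]
  simp_rw [sum_iv_units]
  simp [iv]

lemma sum_onY : ∑ s : Fˣ × Fˣ, iv (onY s) = Fintype.card Fˣ := by
  unfold onY
  rw [Fintype.sum_prod_type]
  simp_rw [sum_iv_units]
  simp [iv]

lemma sum_onZ : ∑ s : Fˣ × Fˣ, iv (onZ s) = Fintype.card Fˣ := by
  unfold onZ
  rw [Fintype.sum_prod_type_right]
  simp_rw [sum_iv_units]
  simp [iv]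

lemma sum_onL : ∑ s : Fˣ × Fˣ, iv (onL s) = Fintype.card Fˣ - 1 := by
  unfold onL
  rw [Fintype.sum_prod_type]
  have : ∀ s t : Fˣ, (s : F) + t = 1 ↔ (t : F) = 1 - s := fun s t => by
    rw [eq_sub_iff_add_eq']
  simp_rw [this, sum_iv_units, ne_eq, iv_not, Finset.sum_sub_distrib]
  have h2 : ∀ s : Fˣ, (1 - (s : F) = 0) ↔ (s : F) = 1 := fun s => by
    rw [sub_eq_zero, eq_comm]
  simp_rw [h2, sum_iv_units]
  simp [iv]

lemma sum_wt : ∑ s : Fˣ × Fˣ, wt s = Fintype.card Fˣ * (Fintype.card Fˣ + 2) := by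
  unfold wt
  simp_rw [Finset.sum_add_distrib, ← Finset.mul_sum, sum_onX, sum_onY, sum_onZ, sum_onL]
  ring

/-- The intersection of `L` with its translate is all of `L` if `h = 1`, empty if exactly one of `h.1 = 1`,
`h.2 = 1`, `h.1 = h.2` holds, and one point otherwise; no two of these equalities hold without the third. -/
lemma corr_LL (h : Fˣ × Fˣ) : ∑ s, iv (onL s) * iv (onL (s * h)) =
    1 - iv (onX h) - iv (onY h) - iv ((h.1 : F) = h.2)
      + (Fintype.card Fˣ + 1) * iv (onX h ∧ onY h) := by
  obtain ⟨a, b⟩ := h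
  simp only [onX, onY, onL, Prod.fst_mul, Prod.snd_mul, Units.val_mul]
  by_cases hab : (a : F) = b
  · by_cases ha : (a : F) = 1
    · have hb : (b : F) = 1 := hab ▸ ha
      have := sum_onL (F := F)
      unfold onL at this
      rw [iv_true ha, iv_true hb, iv_true hab, iv_true ⟨ha, hb⟩]
      simp only [ha, hb, mul_one, ← iv_and, and_self, this]
      ring
    · have hb : ¬ (b : F) = 1 := hab ▸ ha
      rw [sum_none, iv_false ha, iv_false hb, iv_true hab, iv_false (fun h => ha h.1)]
      · ring
      · intro s h1 h2
        rw [← hab, ← add_mul, h1, one_mul] at h2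
        exact ha h2
  · have hab' : (a : F) - b ≠ 0 := sub_ne_zero.2 hab
    rw [sum_point (F := F) _ _ ((1 - b) / (a - b)) ((a - 1) / (a - b))]
    · rw [iv_false hab, iv_and, ne_eq, ne_eq, iv_not, iv_not]
      have e1 : ((1 - (b : F)) / (a - b) = 0) ↔ (b : F) = 1 := by
        rw [div_eq_zero_iff, or_iff_left hab', sub_eq_zero, eq_comm]
      have e2 : (((a : F) - 1) / (a - b) = 0) ↔ (a : F) = 1 := by
        rw [div_eq_zero_iff, or_iff_left hab', sub_eq_zero]
      rw [iv_congr e1, iv_congr e2]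
      have : iv ((a : F) = 1) * iv ((b : F) = 1) = 0 := by
        rw [← iv_and, iv_false]
        rintro ⟨h1, h2⟩; exact hab (h1.trans h2.symm)
      linear_combination (-(Fintype.card Fˣ : ℤ)) * this
    · intro s
      rw [eq_div_iff hab', eq_div_iff hab']
      constructor
      · rintro ⟨h1, h2⟩
        constructor
        · linear_combination h2 - b * h1
        · linear_combination a * h1 - h2
      · rintro ⟨h1, h2⟩
        constructor
        · apply mul_right_cancel₀ hab'; linear_combination h1 + h2
        · apply mul_right_cancel₀ hab'; linear_combination a * h1 + b * h2

lemma corr_LX (h : Fˣ × Fˣ) : ∑ s, iv (onL s) * iv (onX (s * h)) = 1 - iv (onX h) := by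
  obtain ⟨a, b⟩ := h
  have ha : (a : F) ≠ 0 := a.ne_zero
  simp only [onX, onL, Prod.fst_mul, Units.val_mul]
  rw [sum_point (F := F) _ _ (1 / a) ((a - 1) / a), ← iv_not, iv_true (one_div_ne_zero ha), one_mul]
  · apply iv_congr
    simp [div_eq_zero_iff, ha, sub_eq_zero]
  · intro s
    rw [eq_div_iff ha, eq_div_iff ha]
    constructor
    · rintro ⟨h1, h2⟩
      exact ⟨h2, by linear_combination a * h1 - h2⟩
    · rintro ⟨h1, h2⟩
      exact ⟨by apply mul_right_cancel₀ ha; linear_combination h1 + h2, h1⟩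

lemma corr_XL (h : Fˣ × Fˣ) : ∑ s, iv (onX s) * iv (onL (s * h)) = 1 - iv (onX h) := by
  obtain ⟨a, b⟩ := h
  have hb : (b : F) ≠ 0 := b.ne_zero
  simp only [onX, onL, Prod.fst_mul, Prod.snd_mul, Units.val_mul]
  rw [sum_point (F := F) _ _ 1 ((1 - a) / b), ← iv_not, iv_true one_ne_zero, one_mul]
  · apply iv_congr
    rw [ne_eq, div_eq_zero_iff, or_iff_left hb, sub_eq_zero, eq_comm]
  · intro s
    rw [eq_div_iff hb]
    refine and_congr_right fun h1 => ?_
    rw [h1, one_mul, eq_sub_iff_add_eq']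

lemma corr_LZ (h : Fˣ × Fˣ) :
    ∑ s, iv (onL s) * iv (onZ (s * h)) = 1 - iv ((h.1 : F) = h.2) := by
  obtain ⟨a, b⟩ := h
  have ha : (a : F) ≠ 0 := a.ne_zero
  have hb : (b : F) ≠ 0 := b.ne_zero
  simp only [onZ, onL, Prod.fst_mul, Prod.snd_mul, Units.val_mul]
  by_cases hab : (a : F) = b
  · rw [iv_true hab, sum_none, sub_self]
    intro s h1 h2
    apply hb
    rw [hab] at h2
    linear_combination (-(b : F)) * h1 + h2
  · have hab' : (a : F) - b ≠ 0 := sub_ne_zero.2 hab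
    rw [sum_point (F := F) _ _ (-b / (a - b)) (a / (a - b)), iv_true (div_ne_zero (neg_ne_zero.2 hb) hab'),
      iv_true (div_ne_zero ha hab'), iv_false hab]
    · ring
    · intro s
      rw [eq_div_iff hab', eq_div_iff hab']
      constructor
      · rintro ⟨h1, h2⟩
        exact ⟨by linear_combination h2 - b * h1, by linear_combination a * h1 - h2⟩
      · rintro ⟨h1, h2⟩
        constructor
        · apply mul_right_cancel₀ hab'; linear_combination h1 + h2
        · apply mul_right_cancel₀ hab'; linear_combination a * h1 + b * h2

lemma corr_ZL (h : Fˣ × Fˣ) :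
    ∑ s, iv (onZ s) * iv (onL (s * h)) = 1 - iv ((h.1 : F) = h.2) := by
  obtain ⟨a, b⟩ := h
  simp only [onZ, onL, Prod.fst_mul, Prod.snd_mul, Units.val_mul]
  by_cases hab : (a : F) = b
  · rw [iv_true hab, sum_none, sub_self]
    intro s h1 h2
    apply one_ne_zero (α := F)
    rw [hab] at h2
    linear_combination (b : F) * h1 - h2
  · have hab' : (a : F) - b ≠ 0 := sub_ne_zero.2 hab
    rw [sum_point (F := F) _ _ (1 / (a - b)) (-1 / (a - b)), iv_true (one_div_ne_zero hab'),
      iv_true (div_ne_zero (neg_ne_zero.2 one_ne_zero) hab'), iv_false hab]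
    · ring
    · intro s
      rw [eq_div_iff hab', eq_div_iff hab']
      constructor
      · rintro ⟨h1, h2⟩
        exact ⟨by linear_combination h2 - b * h1, by linear_combination a * h1 - h2⟩
      · rintro ⟨h1, h2⟩
        constructor
        · apply mul_right_cancel₀ hab'; linear_combination h1 + h2
        · apply mul_right_cancel₀ hab'; linear_combination a * h1 + b * h2

lemma sum_swap (H : Fˣ × Fˣ → ℤ) : ∑ s, H s = ∑ s : Fˣ × Fˣ, H s.swap :=
  (Equiv.sum_comp (Equiv.prodComm Fˣ Fˣ) H).symm

lemma corr_LY (h : Fˣ × Fˣ) : ∑ s, iv (onL s) * iv (onY (s * h)) = 1 - iv (onY h) := by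
  rw [sum_swap]
  simp_rw [swap_mul', onL_swap, onY_swap, corr_LX, onX_swap]

lemma corr_YL (h : Fˣ × Fˣ) : ∑ s, iv (onY s) * iv (onL (s * h)) = 1 - iv (onY h) := by
  rw [sum_swap]
  simp_rw [swap_mul', onL_swap, onY_swap, corr_XL, onX_swap]

lemma corr_XX (h : Fˣ × Fˣ) :
    ∑ s, iv (onX s) * iv (onX (s * h)) = Fintype.card Fˣ * iv (onX h) := by
  rw [← sum_onX, Finset.sum_mul]
  refine Finset.sum_congr rfl fun s _ => ?_
  rw [← iv_and, ← iv_and]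
  refine iv_congr (and_congr_right fun hs => ?_)
  simp only [onX, Prod.fst_mul, Units.val_mul] at hs ⊢
  rw [hs, one_mul]

lemma corr_YY (h : Fˣ × Fˣ) :
    ∑ s, iv (onY s) * iv (onY (s * h)) = Fintype.card Fˣ * iv (onY h) := by
  rw [sum_swap]
  simp_rw [swap_mul', onY_swap, corr_XX, onX_swap]

lemma corr_ZZ (h : Fˣ × Fˣ) :
    ∑ s, iv (onZ s) * iv (onZ (s * h)) = Fintype.card Fˣ * iv ((h.1 : F) = h.2) := by
  rw [← sum_onZ, Finset.sum_mul]
  refine Finset.sum_congr rfl fun s _ => ?_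
  rw [← iv_and, ← iv_and]
  refine iv_congr (and_congr_right fun hs => ?_)
  simp only [onZ, Prod.fst_mul, Prod.snd_mul, Units.val_mul] at hs ⊢
  rw [hs, neg_mul, neg_inj]
  exact mul_right_inj' s.2.ne_zero

lemma corr_XY (h : Fˣ × Fˣ) : ∑ s, iv (onX s) * iv (onY (s * h)) = 1 := by
  have hb : (h.2 : F) ≠ 0 := h.2.ne_zero
  rw [sum_point (F := F) _ _ 1 (1 / h.2), iv_true one_ne_zero, iv_true (one_div_ne_zero hb), one_mul]
  intro s
  simp only [onX, onY, Prod.snd_mul, Units.val_mul]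
  rw [eq_div_iff hb]

lemma corr_YX (h : Fˣ × Fˣ) : ∑ s, iv (onY s) * iv (onX (s * h)) = 1 := by
  rw [sum_swap]
  simp_rw [swap_mul', onY_swap, onX_swap, corr_XY]

lemma corr_XZ (h : Fˣ × Fˣ) : ∑ s, iv (onX s) * iv (onZ (s * h)) = 1 := by
  have ha : (h.1 : F) ≠ 0 := h.1.ne_zero
  have hb : (h.2 : F) ≠ 0 := h.2.ne_zero
  rw [sum_point (F := F) _ _ 1 (-h.1 / h.2), iv_true one_ne_zero,
    iv_true (div_ne_zero (neg_ne_zero.2 ha) hb), one_mul]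
  intro s
  simp only [onX, onZ, Prod.fst_mul, Prod.snd_mul, Units.val_mul]
  rw [eq_div_iff hb]
  refine and_congr_right fun h1 => ?_
  rw [h1, one_mul, eq_comm, neg_eq_iff_eq_neg]

lemma corr_ZX (h : Fˣ × Fˣ) : ∑ s, iv (onZ s) * iv (onX (s * h)) = 1 := by
  have ha : (h.1 : F) ≠ 0 := h.1.ne_zero
  rw [sum_point (F := F) _ _ (1 / h.1) (-(1 / h.1)), iv_true (one_div_ne_zero ha),
    iv_true (neg_ne_zero.2 (one_div_ne_zero ha)), one_mul]
  intro s
  simp only [onX, onZ, Prod.fst_mul, Units.val_mul]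
  rw [← eq_div_iff ha, and_comm]
  refine and_congr_right fun h1 => ?_
  rw [h1, eq_comm, neg_eq_iff_eq_neg]

lemma corr_YZ (h : Fˣ × Fˣ) : ∑ s, iv (onY s) * iv (onZ (s * h)) = 1 := by
  rw [sum_swap]
  simp_rw [swap_mul', onY_swap, onZ_swap, corr_XZ]

lemma corr_ZY (h : Fˣ × Fˣ) : ∑ s, iv (onZ s) * iv (onY (s * h)) = 1 := by
  rw [sum_swap]
  simp_rw [swap_mul', onY_swap, onZ_swap, corr_ZX]

/-- The autocorrelation of the weight. -/
lemma corr_wt (h : Fˣ × Fˣ) (m : ℤ) (hm : m = Fintype.card Fˣ) : ∑ s, wt s * wt (s * h) =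
    m ^ 2 + 6 * m + 6
      - m * (m + 1) * (iv (onX h) + iv (onY h) + iv ((h.1 : F) = h.2))
      + m ^ 2 * (m + 1) * iv (onX h ∧ onY h) := by
  have expand : ∀ s, wt s * wt (s * h) =
      m ^ 2 * (iv (onL s) * iv (onL (s * h)))
      + m * (iv (onL s) * iv (onX (s * h)) + iv (onL s) * iv (onY (s * h))
        + iv (onL s) * iv (onZ (s * h)) + iv (onX s) * iv (onL (s * h))
        + iv (onY s) * iv (onL (s * h)) + iv (onZ s) * iv (onL (s * h)))
      + (iv (onX s) * iv (onX (s * h)) + iv (onY s) * iv (onY (s * h))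
        + iv (onZ s) * iv (onZ (s * h)))
      + (iv (onX s) * iv (onY (s * h)) + iv (onY s) * iv (onX (s * h))
        + iv (onX s) * iv (onZ (s * h)) + iv (onZ s) * iv (onX (s * h))
        + iv (onY s) * iv (onZ (s * h)) + iv (onZ s) * iv (onY (s * h))) := by
    intro s
    unfold wt
    rw [← hm]; ring
  simp_rw [expand, Finset.sum_add_distrib, ← Finset.mul_sum, Finset.sum_add_distrib,
    corr_LL, corr_LX, corr_LY, corr_LZ, corr_XL, corr_YL, corr_ZL, corr_XX, corr_YY, corr_ZZ,
    corr_XY, corr_YX, corr_XZ, corr_ZX, corr_YZ, corr_ZY]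
  rw [← hm]; ring


/-! ### The monomial map -/

lemma card_fiber_mul {G : Type*} [CommGroup G] [Finite G] {ρ : G}
    (hρ : ∀ x : G, x ∈ Subgroup.zpowers ρ) (b c i : ℤ) :
    Nat.card {z : G × G // z.1 ^ b * z.2 ^ c = ρ ^ i} =
      if (Int.gcd b (Int.gcd c (Nat.card G)) : ℤ) ∣ i then
        Nat.card G * Int.gcd b (Int.gcd c (Nat.card G)) else 0 :=
  card_fiber_linHom (A := Additive G) (ρ := Additive.ofMul ρ) (fun x => hρ x.toMul) b c i

lemma card_ker_mul {G : Type*} [CommGroup G] [Finite G] {ρ : G}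
    (hρ : ∀ x : G, x ∈ Subgroup.zpowers ρ)
    (b11 b12 b21 b22 : ℤ) (hdet : b11 * b22 - b12 * b21 ≠ 0) :
    Nat.card {z : G × G // z.1 ^ b11 * z.2 ^ b12 = 1 ∧ z.1 ^ b21 * z.2 ^ b22 = 1} =
      Int.gcd ((Nat.card G : ℤ) *
      (Int.gcd (Int.gcd b11 (Int.gcd b12 (Nat.card G))) (Int.gcd (Int.gcd b21 (Int.gcd b22 (Nat.card G)))
        (Int.gcd (b11 - b21) (Int.gcd (b12 - b22) (Nat.card G)))) : ℕ)) (b11 * b22 - b12 * b21) :=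
  card_ker_pair (A := Additive G) (ρ := Additive.ofMul ρ) (fun x => hρ x.toMul) b11 b12 b21 b22 hdet

lemma sum_iv_fiber {G : Type*} [CommGroup G] [Fintype G] {ρ : G}
    (hρ : ∀ x : G, x ∈ Subgroup.zpowers ρ) (b c i : ℤ) (P : G × G → Prop)
    (hP : ∀ z, P z ↔ z.1 ^ b * z.2 ^ c = ρ ^ (-i)) :
    ∑ z, iv (P z) = Fintype.card G * (if (Int.gcd b (Int.gcd c (Nat.card G)) : ℤ) ∣ i then
        (Int.gcd b (Int.gcd c (Nat.card G)) : ℤ) else 0) := by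
  simp_rw [hP]
  rw [sum_iv_card, card_fiber_mul hρ]
  simp only [dvd_neg]
  split_ifs <;> simp [Nat.card_eq_fintype_card]

/-- The monomial map `(x, y) ↦ (x^b11 y^b12, x^b21 y^b22)`. -/
def monHom {G : Type*} [CommGroup G] (b11 b12 b21 b22 : ℤ) : G × G →* G × G :=
  MonoidHom.mk' (fun z => (z.1 ^ b11 * z.2 ^ b12, z.1 ^ b21 * z.2 ^ b22)) (by
    intro x y
    simp only [Prod.fst_mul, Prod.snd_mul, mul_zpow, Prod.mk_mul_mk]
    exact Prod.ext (mul_mul_mul_comm ..) (mul_mul_mul_comm ..))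

lemma neg_one_eq {F : Type*} [Field F] [Fintype F] {q : ℕ} (hF : Fintype.card F = q)
    {ρ : Fˣ} (hρ : ∀ x : Fˣ, x ∈ Subgroup.zpowers ρ) {w : ℤ}
    (hw : w = if Even q then 0 else ((q : ℤ) - 1) / 2) : ρ ^ w = -1 := by
  split_ifs at hw with hq
  · have h2 : ringChar F = 2 := FiniteField.even_card_iff_char_two.2 (by rw [hF]; exact Nat.even_iff.1 hq)
    have : CharP F 2 := h2 ▸ ringChar.charP F
    rw [hw, zpow_zero]
    ext
    simp [CharTwo.neg_eq]
  · have hcard : orderOf ρ = q - 1 := by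
      rw [orderOf_eq_card_of_forall_mem_zpowers hρ, Nat.card_units, Nat.card_eq_fintype_card, hF]
    have hq1 : 1 < q := hF ▸ Fintype.one_lt_card
    have hodd : q % 2 = 1 := by
      rcases Nat.even_or_odd q with h | h
      · exact absurd h hq
      · exact Nat.odd_iff.1 h
    have h2w : w * 2 = (q : ℤ) - 1 := by omega
    have hsq : ρ ^ w * ρ ^ w = 1 := by
      rw [← zpow_add, ← orderOf_dvd_iff_zpow_eq_one, hcard]
      exact ⟨1, by push_cast [Nat.cast_sub hq1.le]; linarith⟩
    have hne : ρ ^ w ≠ 1 := by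
      rw [ne_eq, ← orderOf_dvd_iff_zpow_eq_one, hcard]
      intro h
      have := Int.le_of_dvd (by omega) h
      omega
    have h3 : ((ρ ^ w : Fˣ) : F) * (ρ ^ w : Fˣ) = 1 := by
      rw [← Units.val_mul, hsq, Units.val_one]
    rcases mul_self_eq_one_iff.1 h3 with h | h
    · exact absurd (Units.ext h) hne
    · exact Units.ext (by simpa using h)

end Field

end TrinomialCurve

open TrinomialCurve

/-- The double sum of N_{ij}² over 0 ≤ i, j ≤ q-2 equals (q-1)²·q·(k-d-e-f+2). -/
theorem trinomial_sum_sq {p n q : ℕ} (hp : p.Prime) (hn : 0 < n) (hq : q = p ^ n)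
    {F : Type*} [Field F] [Fintype F] (hF : Fintype.card F = q)
    (ρ : Fˣ) (hρ : ∀ x : Fˣ, x ∈ Subgroup.zpowers ρ)
    (a11 a12 a21 a22 a31 a32 : ℕ)
    (b11 b12 b21 b22 : ℤ)
    (hb11 : b11 = (a11 : ℤ) - (a31 : ℤ)) (hb12 : b12 = (a12 : ℤ) - (a32 : ℤ))
    (hb21 : b21 = (a21 : ℤ) - (a31 : ℤ)) (hb22 : b22 = (a22 : ℤ) - (a32 : ℤ))
    (hdet : b11 * b22 - b12 * b21 ≠ 0)
    (d e f k w : ℤ)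
    (hd : d = Int.gcd b11 (Int.gcd b12 ((q : ℤ) - 1)))
    (he : e = Int.gcd b21 (Int.gcd b22 ((q : ℤ) - 1)))
    (hf : f = Int.gcd (b11 - b21) (Int.gcd (b12 - b22) ((q : ℤ) - 1)))
    (hk : k = Int.gcd (((q : ℤ) - 1) * (Int.gcd d (Int.gcd e f) : ℕ))
      (b11 * b22 - b12 * b21))
    (hw : w = if Even q then 0 else ((q : ℤ) - 1) / 2)
    (D : ℤ → ℤ → ℤ) (hD : ∀ ℓ i : ℤ, D ℓ i = if ℓ ∣ i then ℓ else 0)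
    (C : ℤ → ℤ → ℕ)
    (hC : ∀ i j : ℤ, C i j = Nat.card {xy : Fˣ × Fˣ //
      ((ρ ^ i : Fˣ) : F) * (xy.1 : F) ^ a11 * (xy.2 : F) ^ a12
        + ((ρ ^ j : Fˣ) : F) * (xy.1 : F) ^ a21 * (xy.2 : F) ^ a22
        = (xy.1 : F) ^ a31 * (xy.2 : F) ^ a32})
    (N : ℤ → ℤ → ℤ)
    (hN : ∀ i j : ℤ, N i j = (C i j : ℤ) - ((q : ℤ) + 1) + D d i + D e j + D f (i - j + w)) :
    (∑ i ∈ Finset.range (q - 1), ∑ j ∈ Finset.range (q - 1), (N (i : ℤ) (j : ℤ)) ^ 2)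
      = ((q : ℤ) - 1) ^ 2 * (q : ℤ) * (k - d - e - f + 2) := by
  classical
  have hq1 : 1 < q := hF ▸ Fintype.one_lt_card
  have hm : Fintype.card Fˣ = q - 1 := by rw [Fintype.card_units, hF]
  have hmN : Nat.card Fˣ = q - 1 := by rw [Nat.card_eq_fintype_card, hm]
  have hmZ : ((q : ℤ) - 1) = (Nat.card Fˣ : ℤ) := by rw [hmN]; push_cast [Nat.cast_sub hq1.le]; rfl
  have hmF : ((q : ℤ) - 1) = (Fintype.card Fˣ : ℤ) := by rw [hm]; push_cast [Nat.cast_sub hq1.le]; rfl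
  have hneg := neg_one_eq hF hρ hw
  let φ : Fˣ × Fˣ →* Fˣ × Fˣ := monHom b11 b12 b21 b22
  have hφ : ∀ z, φ z = (z.1 ^ b11 * z.2 ^ b12, z.1 ^ b21 * z.2 ^ b22) := fun _ => rfl
  have hCsum : ∀ i j : ℤ, ∑ z, iv (onL ((ρ ^ i, ρ ^ j) * φ z)) = C i j := by
    intro i j
    rw [sum_iv_card, hC]
    congr 1
    refine Nat.card_congr (Equiv.subtypeEquivRight fun z => ?_)
    have hx : (z.1 : F) ≠ 0 := z.1.ne_zero
    have hy : (z.2 : F) ≠ 0 := z.2.ne_zero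
    have hxa := pow_ne_zero a31 hx
    have hya := pow_ne_zero a32 hy
    simp only [onL, hφ, Prod.mk_mul_mk, Units.val_mul, Units.val_zpow_eq_zpow_val, hb11, hb12, hb21, hb22,
      zpow_sub₀ hx, zpow_sub₀ hy, zpow_natCast]
    rw [← mul_left_inj' (mul_ne_zero hxa hya), one_mul]
    field_simp
  have hXsum : ∀ i j : ℤ, ∑ z, iv (onX ((ρ ^ i, ρ ^ j) * φ z)) = ((q : ℤ) - 1) * D d i := by
    intro i j
    rw [hD, hd, hmZ, sum_iv_fiber hρ b11 b12 i, Nat.card_eq_fintype_card]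
    intro z
    simp only [onX, hφ, Prod.mk_mul_mk, Units.val_eq_one]
    rw [mul_eq_one_iff_inv_eq, zpow_neg, eq_comm]
  have hYsum : ∀ i j : ℤ, ∑ z, iv (onY ((ρ ^ i, ρ ^ j) * φ z)) = ((q : ℤ) - 1) * D e j := by
    intro i j
    rw [hD, he, hmZ, sum_iv_fiber hρ b21 b22 j, Nat.card_eq_fintype_card]
    intro z
    simp only [onY, hφ, Prod.mk_mul_mk, Units.val_eq_one]
    rw [mul_eq_one_iff_inv_eq, zpow_neg, eq_comm]
  have hdiv : ∀ z : Fˣ × Fˣ, z.1 ^ (b11 - b21) * z.2 ^ (b12 - b22) =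
      (z.1 ^ b11 * z.2 ^ b12) / (z.1 ^ b21 * z.2 ^ b22) := by
    intro z
    rw [zpow_sub, zpow_sub, ← div_eq_mul_inv, ← div_eq_mul_inv, div_mul_div_comm]
  -- Here `-1 = ρ ^ (-w)` is used as well as `-1 = ρ ^ w`, so the sign of `w` is immaterial.
  have hZsum : ∀ i j : ℤ, ∑ z, iv (onZ ((ρ ^ i, ρ ^ j) * φ z)) = ((q : ℤ) - 1) * D f (i - j + w) := by
    intro i j
    rw [hD, hf, hmZ, sum_iv_fiber hρ (b11 - b21) (b12 - b22) (i - j + w), Nat.card_eq_fintype_card]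
    intro z
    simp only [onZ, hφ, Prod.mk_mul_mk]
    rw [hdiv, ← Units.val_neg, Units.val_inj, neg_add, neg_sub, zpow_add, zpow_neg _ w, hneg, inv_neg_one,
      zpow_sub, div_eq_iff_eq_mul]
    constructor
    · intro h
      rw [eq_inv_mul_of_mul_eq h]
      simp only [mul_neg, mul_one, neg_mul, neg_inj]
      ac_rfl
    · intro h
      rw [h]
      simp only [mul_neg, mul_one, neg_mul, neg_inj]
      rw [mul_comm (ρ ^ j)]
      simp only [mul_assoc, mul_inv_cancel_left]
  have hNsum : ∀ i j : ℤ, ((q : ℤ) - 1) * N i j =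
      ∑ z, wt ((ρ ^ i, ρ ^ j) * φ z) - ((q : ℤ) - 1) * (q + 1) := by
    intro i j
    unfold wt
    simp_rw [Finset.sum_add_distrib, ← Finset.mul_sum, hCsum, hXsum, hYsum, hZsum]
    rw [hN, ← hmF]
    ring
  have hRX : ∑ z, iv (onX (φ z)) = ((q : ℤ) - 1) * d := by
    rw [hd, hmZ, sum_iv_fiber hρ b11 b12 0, Nat.card_eq_fintype_card, if_pos (dvd_zero _)]
    intro z
    simp only [onX, hφ, Units.val_eq_one, neg_zero, zpow_zero]
  have hRY : ∑ z, iv (onY (φ z)) = ((q : ℤ) - 1) * e := by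
    rw [he, hmZ, sum_iv_fiber hρ b21 b22 0, Nat.card_eq_fintype_card, if_pos (dvd_zero _)]
    intro z
    simp only [onY, hφ, Units.val_eq_one, neg_zero, zpow_zero]
  have hRZ : ∑ z, iv (((φ z).1 : F) = (φ z).2) = ((q : ℤ) - 1) * f := by
    rw [hf, hmZ, sum_iv_fiber hρ (b11 - b21) (b12 - b22) 0, Nat.card_eq_fintype_card, if_pos (dvd_zero _)]
    intro z
    simp only [hφ, Units.val_inj, neg_zero, zpow_zero]
    rw [hdiv, div_eq_one]
  have hRK : ∑ z, iv (onX (φ z) ∧ onY (φ z)) = k := by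
    rw [hk, hd, he, hf, hmZ, ← card_ker_mul hρ b11 b12 b21 b22 hdet, ← sum_iv_card]
    simp only [onX, onY, hφ, Units.val_eq_one]
  have hcardP : (Fintype.card (Fˣ × Fˣ) : ℤ) = ((q : ℤ) - 1) ^ 2 := by
    rw [Fintype.card_prod, Nat.cast_mul, ← hmF, sq]
  have hcorr : ∑ z, ∑ s, wt s * wt (s * φ z) =
      ((q : ℤ) - 1) ^ 2 * (((q : ℤ) - 1) ^ 2 + 6 * (q - 1) + 6)
       - (q - 1) * q * ((q - 1) * d + (q - 1) * e + (q - 1) * f) + (q - 1) ^ 2 * q * k := by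
    simp_rw [fun z => corr_wt (φ z) _ hmF, Finset.sum_add_distrib, Finset.sum_sub_distrib,
      ← Finset.mul_sum, Finset.sum_add_distrib, hRX, hRY, hRZ, hRK]
    simp only [Finset.sum_const, Finset.card_univ, nsmul_eq_mul, hcardP]
    ring
  have hmain : ((q : ℤ) - 1) ^ 2 *
      (∑ i ∈ Finset.range (q - 1), ∑ j ∈ Finset.range (q - 1), (N (i : ℤ) (j : ℤ)) ^ 2) =
      ∑ α : Fˣ × Fˣ, (∑ z, wt (α * φ z) - ((q : ℤ) - 1) * (q + 1)) ^ 2 := by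
    simp_rw [Finset.mul_sum, ← mul_pow, hNsum]
    rw [← hm, Fintype.sum_prod_type]
    rw [← sum_generator ρ hρ]
    refine Finset.sum_congr rfl fun i _ => ?_
    rw [← sum_generator ρ hρ]
  have hq0 : ((q : ℤ) - 1) ^ 2 ≠ 0 := pow_ne_zero _ (by omega)
  apply mul_left_cancel₀ hq0
  rw [hmain]
  have hsq : ∀ α : Fˣ × Fˣ, (∑ z, wt (α * φ z) - ((q : ℤ) - 1) * (q + 1)) ^ 2 =
      (∑ z, wt (α * φ z)) ^ 2 - 2 * (((q : ℤ) - 1) * (q + 1)) * ∑ z, wt (α * φ z)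
        + (((q : ℤ) - 1) * (q + 1)) ^ 2 := fun α => by ring
  simp_rw [hsq]
  rw [Finset.sum_add_distrib, Finset.sum_sub_distrib, ← Finset.mul_sum, sum_sq_eq_autocorr,
    sum_sum_translate, sum_wt,
    hcorr, Finset.sum_const, Finset.card_univ, nsmul_eq_mul, hcardP, ← hmF]
  ring
end
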